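/- Boundary local maximum principle in half-balls. For every integer n ≥ 2, reals 0 < λ ≤ Λ, exponents q > n and p with n ≤ p ≤ q, d₀ ∈ (0,1/4], K > 0, and every r > 0, there exists a constant C > 0 such that the following holds. Let b, f : B₂⁺ → ℝ be continuous with b ≥ 0 and ‖b‖_{L^q(B₂⁺)} ≤ K, and let u be continuous on B₂⁺ ∪ B₂⁰ and C² on B₂⁺, with L⁺[u] ≥ −f in B₂⁺ and u ≤ 0 on B₂⁰. Then sup_{x ∈ B₁⁺} u⁺(x)/x_n ≤ C·( (∫_{B_{3/2}⁺} (u⁺(x))^r dx)^{1/r} + ‖f⁺‖_{L^{p,q}(B₂⁺)} ). -/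

import Mathlib

open MeasureTheory
open scoped ENNReal

/-- The Pucci minimal extremal operator `𝓜⁻(M)` with ellipticity constants `lam ≤ Lam`:
the infimum of `tr(A*M)` over symmetric matrices `A` with `lam•I ≤ A ≤ Lam•I`. -/
noncomputable def pucciMinus (n : ℕ) (lam Lam : ℝ) (M : Matrix (Fin n) (Fin n) ℝ) : ℝ :=
  sInf { t : ℝ | ∃ A : Matrix (Fin n) (Fin n) ℝ, A.IsSymm ∧
    (A - lam • (1 : Matrix (Fin n) (Fin n) ℝ)).PosSemidef ∧
    (Lam • (1 : Matrix (Fin n) (Fin n) ℝ) - A).PosSemidef ∧ t = (A * M).trace }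

/-- The Pucci maximal extremal operator `𝓜⁺(M)`. -/
noncomputable def pucciPlus (n : ℕ) (lam Lam : ℝ) (M : Matrix (Fin n) (Fin n) ℝ) : ℝ :=
  sSup { t : ℝ | ∃ A : Matrix (Fin n) (Fin n) ℝ, A.IsSymm ∧
    (A - lam • (1 : Matrix (Fin n) (Fin n) ℝ)).PosSemidef ∧
    (Lam • (1 : Matrix (Fin n) (Fin n) ℝ) - A).PosSemidef ∧ t = (A * M).trace }

/-- The Hessian matrix `D²u(x)` of `u` at `x`. -/
noncomputable def hess (n : ℕ) (u : EuclideanSpace ℝ (Fin n) → ℝ)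
    (x : EuclideanSpace ℝ (Fin n)) : Matrix (Fin n) (Fin n) ℝ :=
  fun i j => fderiv ℝ (fun y => fderiv ℝ u y (EuclideanSpace.single j (1 : ℝ))) x
    (EuclideanSpace.single i (1 : ℝ))

/-- The euclidean norm `|Du(x)|` of the gradient of `u` at `x`. -/
noncomputable def gradNorm (n : ℕ) (u : EuclideanSpace ℝ (Fin n) → ℝ)
    (x : EuclideanSpace ℝ (Fin n)) : ℝ := ‖fderiv ℝ u x‖

/-- The `L^p` norm `(∫_E |g|^p)^(1/p)`, as a Lebesgue integral valued in `[0,∞]`. -/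
noncomputable def LpNormE (n : ℕ) (p : ℝ) (g : EuclideanSpace ℝ (Fin n) → ℝ)
    (E : Set (EuclideanSpace ℝ (Fin n))) : ℝ≥0∞ :=
  (∫⁻ x in E, ENNReal.ofReal (|g x| ^ p)) ^ (1 / p)

/-- The last (`n`-th) coordinate `x_n` of a point of `ℝⁿ`. -/
def lastC (n : ℕ) (hn : 1 ≤ n) (x : EuclideanSpace ℝ (Fin n)) : ℝ := x ⟨n - 1, by omega⟩

/-- The open half-ball `B_R⁺ = {|x| < R, x_n > 0}`. -/
def halfBall (n : ℕ) (hn : 1 ≤ n) (R : ℝ) : Set (EuclideanSpace ℝ (Fin n)) :=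
  {x | ‖x‖ < R ∧ 0 < lastC n hn x}

/-- The flat boundary part `B_R⁰ = {|x| ≤ R, x_n = 0}`. -/
def flatB (n : ℕ) (hn : 1 ≤ n) (R : ℝ) : Set (EuclideanSpace ℝ (Fin n)) :=
  {x | ‖x‖ ≤ R ∧ lastC n hn x = 0}

/-- The norm `‖g‖_{L^{p,q}(B_R⁺)} = ‖g‖_{L^p(B_R⁺)} + ‖g‖_{L^q(B_R⁺ ∩ {x_n < d0})}`. -/
noncomputable def LpqNormHB (n : ℕ) (hn : 1 ≤ n) (p q d0 R : ℝ)
    (g : EuclideanSpace ℝ (Fin n) → ℝ) : ℝ≥0∞ :=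
  LpNormE n p g (halfBall n hn R) +
    LpNormE n q g {x ∈ halfBall n hn R | lastC n hn x < d0}

/-- The open cube `Q_ρ` of side `ρ` centered at `(0,…,0,ρ/2)`. -/
def cubeQ (n : ℕ) (hn : 1 ≤ n) (ρ : ℝ) : Set (EuclideanSpace ℝ (Fin n)) :=
  {x | (∀ i : Fin n, i.1 ≠ n - 1 → |x i| < ρ / 2) ∧ 0 < lastC n hn x ∧ lastC n hn x < ρ}

/-- The norm `‖g‖_{L^{p,q}(Q₂)} = ‖g‖_{L^p(Q₂)} + ‖g‖_{L^q(Q₂ ∩ {x_n < d0})}`. -/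
noncomputable def LpqNormQ (n : ℕ) (hn : 1 ≤ n) (p q d0 : ℝ)
    (g : EuclideanSpace ℝ (Fin n) → ℝ) : ℝ≥0∞ :=
  LpNormE n p g (cubeQ n hn 2) +
    LpNormE n q g {x ∈ cubeQ n hn 2 | lastC n hn x < d0}

open scoped MatrixOrder Matrix.Norms.L2Operator in
theorem psd_trace_mul {n : ℕ} {A B : Matrix (Fin n) (Fin n) ℝ} (hA : A.PosSemidef)
    (hB : B.PosSemidef) : 0 ≤ (A * B).trace := by
  obtain ⟨C, hC⟩ := CStarAlgebra.nonneg_iff_eq_star_mul_self.mp hA.nonneg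
  rw [hC, Matrix.mul_assoc, Matrix.trace_mul_comm]
  have := hB.mul_mul_conjTranspose_same C
  exact this.trace_nonneg

theorem psd_entry_bound {n : ℕ} {lam Lam : ℝ} {A : Matrix (Fin n) (Fin n) ℝ} (hlam : 0 < lam)
    (hs : A.IsSymm)
    (h1 : (A - lam • (1 : Matrix (Fin n) (Fin n) ℝ)).PosSemidef)
    (h2 : (Lam • (1 : Matrix (Fin n) (Fin n) ℝ) - A).PosSemidef) (i j : Fin n) :
    |A i j| ≤ Lam := by
  have d1 : ∀ i, lam ≤ A i i := fun i => by
    have := h1.diag_nonneg (i := i); simpa using this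
  have d2 : ∀ i, A i i ≤ Lam := fun i => by
    have := h2.diag_nonneg (i := i); simpa using this
  by_cases hij : i = j
  · subst hij
    rw [abs_of_nonneg (by linarith [d1 i])]; exact d2 i
  · have hA : A.PosSemidef := by
      have := h1.add (Matrix.PosSemidef.smul (Matrix.PosSemidef.one (n := Fin n) (R := ℝ)) hlam.le)
      simpa using this
    have hji : A j i = A i j := hs.apply i j
    have e1 := hA.dotProduct_mulVec_nonneg (Pi.single i 1 + Pi.single j 1)
    have e2 := hA.dotProduct_mulVec_nonneg (Pi.single i 1 - Pi.single j 1)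
    simp [Matrix.mulVec_add, Matrix.mulVec_sub, hji] at e1 e2
    rw [abs_le]
    constructor <;> linarith [d2 i, d2 j]

theorem psd_det_bound {n : ℕ} {H : Matrix (Fin n) (Fin n) ℝ} (hH : (-H).PosSemidef) :
    |H.det| ≤ (-H.trace) ^ n := by
  have h1 : |H.det| = |(-H).det| := by
    rw [Matrix.det_neg, abs_mul]; simp
  have h0 : ∀ i, 0 ≤ hH.1.eigenvalues i := hH.eigenvalues_nonneg
  have h2 : (-H).det = ∏ i, hH.1.eigenvalues i := by
    simpa using hH.1.det_eq_prod_eigenvalues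
  have h3 : -H.trace = ∑ i, hH.1.eigenvalues i := by
    rw [← Matrix.trace_neg]
    simpa using hH.1.trace_eq_sum_eigenvalues
  rw [h1, h2, abs_of_nonneg (Finset.prod_nonneg fun i _ => h0 i), h3]
  calc _ ≤ ∏ i : Fin n, ∑ j, hH.1.eigenvalues j :=
        Finset.prod_le_prod (fun i _ => h0 i)
          (fun i _ => Finset.single_le_sum (fun j _ => h0 j) (Finset.mem_univ i))
    _ = _ := by simp

/-- Extract an (almost) optimal matrix from the Pucci operator, in the form of an inequality on
`-lam * tr H`, where `H` is a negative semidefinite matrix. -/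
theorem pucci_exists {n : ℕ} {lam Lam : ℝ} (hLam : lam ≤ Lam)
    {M : Matrix (Fin n) (Fin n) ℝ} {t : ℝ} (ht : t ≤ pucciPlus n lam Lam M) {ε : ℝ} (hε : 0 < ε) :
    ∃ A : Matrix (Fin n) (Fin n) ℝ, A.IsSymm ∧
    (A - lam • (1 : Matrix (Fin n) (Fin n) ℝ)).PosSemidef ∧
    (Lam • (1 : Matrix (Fin n) (Fin n) ℝ) - A).PosSemidef ∧ t - ε ≤ (A * M).trace := by
  have : t - ε < sSup { t : ℝ | ∃ A : Matrix (Fin n) (Fin n) ℝ, A.IsSymm ∧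
    (A - lam • (1 : Matrix (Fin n) (Fin n) ℝ)).PosSemidef ∧
    (Lam • (1 : Matrix (Fin n) (Fin n) ℝ) - A).PosSemidef ∧ t = (A * M).trace } := by
    unfold pucciPlus at ht; linarith
  have hne : { t : ℝ | ∃ A : Matrix (Fin n) (Fin n) ℝ, A.IsSymm ∧
    (A - lam • (1 : Matrix (Fin n) (Fin n) ℝ)).PosSemidef ∧
    (Lam • (1 : Matrix (Fin n) (Fin n) ℝ) - A).PosSemidef ∧ t = (A * M).trace }.Nonempty := by
    refine ⟨_, lam • (1 : Matrix (Fin n) (Fin n) ℝ), ?_, ?_, ?_, rfl⟩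
    · ext i j; simp [Matrix.one_apply, eq_comm]
    · simpa using Matrix.PosSemidef.zero
    · rw [← sub_smul]
      exact Matrix.PosSemidef.smul Matrix.PosSemidef.one (by linarith)
  obtain ⟨a, ⟨A, h1, h2, h3, rfl⟩, h5⟩ := exists_lt_of_lt_csSup hne this
  exact ⟨A, h1, h2, h3, h5.le⟩

theorem lam_trace_le {n : ℕ} {lam : ℝ} {A H : Matrix (Fin n) (Fin n) ℝ}
    (h1 : (A - lam • (1 : Matrix (Fin n) (Fin n) ℝ)).PosSemidef) (hH : (-H).PosSemidef) :
    lam * (-H.trace) ≤ - (A * H).trace := by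
  have := psd_trace_mul h1 hH
  simp [Matrix.sub_mul] at this
  linarith

theorem snd_deriv_nonpos {n : ℕ} {v : EuclideanSpace ℝ (Fin n) → ℝ} {x : EuclideanSpace ℝ (Fin n)}
    (hv : ContDiffAt ℝ 2 v x) (l : EuclideanSpace ℝ (Fin n) →L[ℝ] ℝ)
    (hm : IsLocalMax (fun y => v y - l y) x) (w : EuclideanSpace ℝ (Fin n)) :
    fderiv ℝ (fderiv ℝ v) x w w ≤ 0 := by
  by_contra hcon
  push Not at hcon
  set g : ℝ → ℝ := fun t => v (x + t • w) - l (x + t • w) with hg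
  have hline : ∀ t : ℝ, HasDerivAt (fun t : ℝ => x + t • w) w t := fun t => by
    simpa using ((hasDerivAt_id t).smul_const w).const_add x
  have htend : Filter.Tendsto (fun t : ℝ => x + t • w) (nhds 0) (nhds x) := by
    have := (hline 0).continuousAt.tendsto
    simpa using this
  have hev : ∀ᶠ y in nhds x, DifferentiableAt ℝ v y := by
    have := hv.eventually (by simp)
    filter_upwards [this] with y hy using hy.differentiableAt (by simp)
  have hd : ∀ᶠ t in nhds (0 : ℝ), HasDerivAt g (fderiv ℝ v (x + t • w) w - l w) t := by
    filter_upwards [htend.eventually hev] with t ht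
    exact (ht.hasFDerivAt.comp_hasDerivAt t (hline t)).sub (l.hasFDerivAt.comp_hasDerivAt t (hline t))
  have hd1 : deriv g =ᶠ[nhds 0] fun t => fderiv ℝ v (x + t • w) w - l w := by
    filter_upwards [hd] with t ht using ht.deriv
  have hdd : DifferentiableAt ℝ (fderiv ℝ v) x :=
    (hv.fderiv_right (m := 1) (by norm_num)).differentiableAt (by simp)
  have hd2 : HasDerivAt (fun t : ℝ => fderiv ℝ v (x + t • w) w - l w)
      (fderiv ℝ (fderiv ℝ v) x w w) 0 := by
    have h1 : HasFDerivAt (fderiv ℝ v) (fderiv ℝ (fderiv ℝ v) x) (x + (0 : ℝ) • w) := by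
      simpa using hdd.hasFDerivAt
    have h2 := h1.comp_hasDerivAt (0 : ℝ) (hline 0)
    have h3 := (h2.clm_apply (hasDerivAt_const (0 : ℝ) w)).sub_const (l w)
    simpa using h3
  have hmax : IsLocalMax g 0 := by
    have := htend.eventually hm
    simpa [IsLocalMax, IsMaxFilter, hg] using this
  have hmin : IsLocalMin g 0 := by
    apply isLocalMin_of_deriv_deriv_pos
    · rw [hd1.deriv_eq, hd2.deriv]; exact hcon
    · exact hmax.deriv_eq_zero
    · exact (hd.self_of_nhds).continuousAt
  have hconst : g =ᶠ[nhds 0] fun _ => g 0 := by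
    filter_upwards [hmax, hmin] with t h1 h2 using le_antisymm h1 h2
  have h4 : deriv g =ᶠ[nhds 0] fun _ => 0 := by
    have := hconst.deriv
    simpa using this
  have h5 := (h4.symm.trans hd1).deriv_eq
  rw [hd2.deriv] at h5
  simp at h5
  linarith

theorem hess_apply {n : ℕ} {v : EuclideanSpace ℝ (Fin n) → ℝ} {x : EuclideanSpace ℝ (Fin n)}
    (hv : ContDiffAt ℝ 2 v x) (i j : Fin n) :
    hess n v x i j = fderiv ℝ (fderiv ℝ v) x (EuclideanSpace.single i 1)
      (EuclideanSpace.single j 1) := by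
  have hdd : DifferentiableAt ℝ (fderiv ℝ v) x :=
    (hv.fderiv_right (m := 1) (by norm_num)).differentiableAt (by simp)
  unfold hess
  rw [(hdd.hasFDerivAt.clm_apply (hasFDerivAt_const (EuclideanSpace.single j (1:ℝ)) x)).fderiv]
  simp

theorem hess_symm {n : ℕ} {v : EuclideanSpace ℝ (Fin n) → ℝ} {x : EuclideanSpace ℝ (Fin n)}
    (hv : ContDiffAt ℝ 2 v x) (i j : Fin n) :
    hess n v x i j = hess n v x j i := by
  rw [hess_apply hv, hess_apply hv]
  exact (hv.isSymmSndFDerivAt (by simp)) _ _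

theorem hess_quad {n : ℕ} {v : EuclideanSpace ℝ (Fin n) → ℝ} {x : EuclideanSpace ℝ (Fin n)}
    (hv : ContDiffAt ℝ 2 v x) (w : Fin n → ℝ) :
    w ⬝ᵥ (hess n v x).mulVec w
      = fderiv ℝ (fderiv ℝ v) x (WithLp.toLp 2 w) (WithLp.toLp 2 w) := by
  have hw : (WithLp.toLp 2 w : EuclideanSpace ℝ (Fin n))
      = ∑ i, w i • EuclideanSpace.single i (1:ℝ) := by
    have := (EuclideanSpace.basisFun (Fin n) ℝ).sum_repr (WithLp.toLp 2 w)
    simpa using this.symm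
  rw [hw]
  simp only [dotProduct, Matrix.mulVec, hess_apply hv, map_sum, map_smul,
    sum_apply, smul_apply, smul_eq_mul, Finset.mul_sum]
  rw [Finset.sum_comm]
  refine Finset.sum_congr rfl fun i _ => Finset.sum_congr rfl fun j _ => ?_
  ring

theorem grad_hasFDerivAt {n : ℕ} {v : EuclideanSpace ℝ (Fin n) → ℝ} {x : EuclideanSpace ℝ (Fin n)}
    (hv : ContDiffAt ℝ 2 v x) : ∃ T : EuclideanSpace ℝ (Fin n) →L[ℝ] EuclideanSpace ℝ (Fin n),
    HasFDerivAt (gradient v) T x ∧ T.det = (hess n v x).det := by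
  have hdd : DifferentiableAt ℝ (fderiv ℝ v) x :=
    (hv.fderiv_right (m := 1) (by norm_num)).differentiableAt (by simp)
  set J : StrongDual ℝ (EuclideanSpace ℝ (Fin n)) →L[ℝ] EuclideanSpace ℝ (Fin n) :=
    LinearMap.toContinuousLinearMap
      { toFun := fun L => (InnerProductSpace.toDual ℝ (EuclideanSpace ℝ (Fin n))).symm L
        map_add' := fun a b => by simp
        map_smul' := fun c a => by simp } with hJ
  have hJi : ∀ (L : StrongDual ℝ (EuclideanSpace ℝ (Fin n))) (i : Fin n),
      (J L) i = L (EuclideanSpace.single i 1) := by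
    intro L i
    have h1 : J L = (InnerProductSpace.toDual ℝ (EuclideanSpace ℝ (Fin n))).symm L := rfl
    have h2 := InnerProductSpace.toDual_symm_apply (𝕜 := ℝ) (x := EuclideanSpace.single i (1:ℝ)) (y := L)
    rw [← h1] at h2
    rw [← h2]
    simp [EuclideanSpace.inner_single_right]
  refine ⟨J ∘L fderiv ℝ (fderiv ℝ v) x, ?_, ?_⟩
  · exact J.hasFDerivAt.comp x hdd.hasFDerivAt
  · rw [ContinuousLinearMap.det, ← LinearMap.det_toMatrix (EuclideanSpace.basisFun (Fin n) ℝ).toBasis]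
    congr 1
    ext i j
    rw [LinearMap.toMatrix_apply]
    rw [hess_symm hv, hess_apply hv]
    simp [hJi]

/-- Open half ball with center `c`. -/
def hB (n : ℕ) (hn : 1 ≤ n) (c : EuclideanSpace ℝ (Fin n)) (R : ℝ) :
    Set (EuclideanSpace ℝ (Fin n)) := {x | ‖x - c‖ < R ∧ 0 < lastC n hn x}

/-- Closed half ball with center `c`. -/
def hQ (n : ℕ) (hn : 1 ≤ n) (c : EuclideanSpace ℝ (Fin n)) (R : ℝ) :
    Set (EuclideanSpace ℝ (Fin n)) := {x | ‖x - c‖ ≤ R ∧ 0 ≤ lastC n hn x}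

theorem lastC_continuous (n : ℕ) (hn : 1 ≤ n) : Continuous (lastC n hn) := by
  unfold lastC; fun_prop

theorem hB_isOpen (n : ℕ) (hn : 1 ≤ n) (c : EuclideanSpace ℝ (Fin n)) (R : ℝ) :
    IsOpen (hB n hn c R) := by
  have h1 : IsOpen {x : EuclideanSpace ℝ (Fin n) | ‖x - c‖ < R} :=
    isOpen_lt (by fun_prop) (by fun_prop)
  have h2 : IsOpen {x : EuclideanSpace ℝ (Fin n) | 0 < lastC n hn x} :=
    isOpen_lt (by fun_prop) (lastC_continuous n hn)
  exact h1.inter h2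

theorem hQ_isCompact (n : ℕ) (hn : 1 ≤ n) (c : EuclideanSpace ℝ (Fin n)) (R : ℝ) :
    IsCompact (hQ n hn c R) := by
  have : hQ n hn c R = Metric.closedBall c R ∩ {x | 0 ≤ lastC n hn x} := by
    ext x; simp [hQ, dist_eq_norm]
  rw [this]
  exact (isCompact_closedBall c R).inter_right
    (isClosed_le (by fun_prop) (lastC_continuous n hn))

theorem hB_subset_hQ (n : ℕ) (hn : 1 ≤ n) (c : EuclideanSpace ℝ (Fin n)) (R : ℝ) :
    hB n hn c R ⊆ hQ n hn c R := fun _ hx => ⟨hx.1.le, hx.2.le⟩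

theorem abp (n : ℕ) (hn : 1 ≤ n) (c : EuclideanSpace ℝ (Fin n)) (R : ℝ) (hR : 0 < R)
    (v : EuclideanSpace ℝ (Fin n) → ℝ)
    (hcont : ContinuousOn v (hQ n hn c R)) (hC2 : ContDiffOn ℝ 2 v (hB n hn c R))
    (hbd : ∀ x ∈ hQ n hn c R, x ∉ hB n hn c R → v x ≤ 0)
    (M : ℝ) (hM : 0 < M) (z : EuclideanSpace ℝ (Fin n)) (hz : z ∈ hQ n hn c R) (hzM : v z = M)
    (G : EuclideanSpace ℝ (Fin n) → ℝ)
    (hG : ∀ x ∈ hB n hn c R, 0 < v x → ‖fderiv ℝ v x‖ < M / (2 * R) →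
      ‖fderiv ℝ v x‖ * (R - ‖x - c‖) ≤ v x → (-hess n v x).PosSemidef →
      -(hess n v x).trace ≤ G x) :
    ENNReal.ofReal ((M / (2 * R)) ^ n) * volume (Metric.ball (0 : EuclideanSpace ℝ (Fin n)) 1)
      ≤ ∫⁻ x in hB n hn c R, ENNReal.ofReal (G x) ^ (n : ℝ) := by
  set D := hB n hn c R with hD
  have hDo : IsOpen D := hB_isOpen n hn c R
  have hC2at : ∀ x ∈ D, ContDiffAt ℝ 2 v x := fun x hx => hC2.contDiffAt (hDo.mem_nhds hx)
  have hcv : ContinuousOn v D := hC2.continuousOn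
  have hcf : ContinuousOn (fderiv ℝ v) D := hC2.continuousOn_fderiv_of_isOpen hDo (by norm_num)
  have hcff : ContinuousOn (fderiv ℝ (fderiv ℝ v)) D :=
    (hC2.fderiv_of_isOpen (m := 1) hDo (by norm_num)).continuousOn_fderiv_of_isOpen hDo (by norm_num)
  set s : Set (EuclideanSpace ℝ (Fin n)) := {x | x ∈ D ∧ (0 < v x ∧ ‖fderiv ℝ v x‖ < M / (2 * R) ∧
    ‖fderiv ℝ v x‖ * (R - ‖x - c‖) ≤ v x ∧ ∀ w, fderiv ℝ (fderiv ℝ v) x w w ≤ 0)} with hs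
  have hsm : MeasurableSet s := by
    have h1 := hcv.domRestrict
    have h2 := hcf.domRestrict
    have h3 := hcff.domRestrict
    have e : s = Subtype.val '' {x : D | (0 < D.domRestrict v x ∧ ‖D.domRestrict (fderiv ℝ v) x‖ < M / (2 * R) ∧
      ‖D.domRestrict (fderiv ℝ v) x‖ * (R - ‖x.1 - c‖) ≤ D.domRestrict v x ∧
      ∀ w, D.domRestrict (fderiv ℝ (fderiv ℝ v)) x w w ≤ 0)} := by
      ext x
      constructor
      · rintro ⟨hx, h⟩; exact ⟨⟨x, hx⟩, h, rfl⟩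
      · rintro ⟨⟨x, hx⟩, h, rfl⟩; exact ⟨hx, h⟩
    rw [e]
    apply hDo.measurableSet.subtype_image
    refine MeasurableSet.inter (isOpen_lt continuous_const h1).measurableSet
      (MeasurableSet.inter (isOpen_lt h2.norm continuous_const).measurableSet
      (MeasurableSet.inter (isClosed_le (h2.norm.mul (by fun_prop)) h1).measurableSet ?_))
    have : {x : D | ∀ w, D.domRestrict (fderiv ℝ (fderiv ℝ v)) x w w ≤ 0}
      = ⋂ w, {x : D | D.domRestrict (fderiv ℝ (fderiv ℝ v)) x w w ≤ 0} := by ext; simp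
    change MeasurableSet {x : D | ∀ w, D.domRestrict (fderiv ℝ (fderiv ℝ v)) x w w ≤ 0}
    rw [this]
    refine (isClosed_iInter fun w => isClosed_le ?_ continuous_const).measurableSet
    exact (h3.clm_apply continuous_const).clm_apply continuous_const
  have hsD : s ⊆ D := fun x hx => hx.1
  -- covering of the ball by gradients
  have hcover : Metric.ball (0 : EuclideanSpace ℝ (Fin n)) (M / (2 * R)) ⊆ gradient v '' s := by
    intro p hp
    rw [mem_ball_zero_iff] at hp
    have hp2 : ‖p‖ * (2 * R) < M := by rwa [lt_div_iff₀ (by positivity)] at hp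
    obtain ⟨x, hxQ, hxmax⟩ := (hQ_isCompact n hn c R).exists_isMaxOn ⟨z, hz⟩
      (f := fun y => v y - inner ℝ p y) (hcont.sub (by fun_prop))
    have hdist : ∀ y, ‖y - c‖ ≤ R → inner ℝ p (y - z) ≥ - (‖p‖ * (2 * R)) := by
      intro y hy
      have h1 : ‖y - z‖ ≤ 2 * R := by
        calc ‖y - z‖ = ‖(y - c) - (z - c)‖ := by congr 1; abel
          _ ≤ ‖y - c‖ + ‖z - c‖ := norm_sub_le _ _
          _ ≤ 2 * R := by linarith [hz.1]
      have h2 := abs_real_inner_le_norm p (y - z)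
      have h3 := mul_le_mul_of_nonneg_left h1 (norm_nonneg p)
      linarith [neg_abs_le (inner ℝ p (y - z))]
    have hzx : v z - inner ℝ p z ≤ v x - inner ℝ p x := hxmax hz
    have hpos : ∀ y, ‖y - c‖ ≤ R → 0 < v x + inner ℝ p (y - x) := by
      intro y hy
      have h1 := hdist y hy
      rw [inner_sub_right] at h1 ⊢
      linarith
    have hvx : 0 < v x := by simpa using hpos x hxQ.1
    have hxD : x ∈ D := by
      by_contra h
      linarith [hbd x hxQ h]
    have hloc : IsLocalMax (fun y => v y - innerSL ℝ p y) x := by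
      filter_upwards [hDo.mem_nhds hxD] with y hy
      exact hxmax (hB_subset_hQ n hn c R hy)
    have hdv : DifferentiableAt ℝ v x := (hC2at x hxD).differentiableAt (by simp)
    have hfd : fderiv ℝ v x = innerSL ℝ p := by
      have h1 := hloc.hasFDerivAt_eq_zero (hdv.hasFDerivAt.sub (innerSL ℝ p).hasFDerivAt)
      exact sub_eq_zero.mp h1
    have hnorm : ‖fderiv ℝ v x‖ = ‖p‖ := by rw [hfd]; exact innerSL_apply_norm ℝ p
    refine ⟨x, ⟨hxD, hvx, by rw [hnorm]; exact hp, ?_, ?_⟩, ?_⟩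
    · rw [hnorm]
      by_cases hp0 : p = 0
      · simp [hp0, hvx.le]
      · have hpn : 0 < ‖p‖ := norm_pos_iff.mpr hp0
        have hρ : 0 < R - ‖x - c‖ := by linarith [hxD.1]
        have h1 := hpos (x - ((R - ‖x - c‖) / ‖p‖) • p) (by
          calc _ = ‖(x - c) - ((R - ‖x - c‖) / ‖p‖) • p‖ := by congr 1; abel
            _ ≤ ‖x - c‖ + ‖((R - ‖x - c‖) / ‖p‖) • p‖ := norm_sub_le _ _
            _ = R := by
              rw [norm_smul, Real.norm_eq_abs, abs_of_pos (by positivity)]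
              field_simp; ring)
        rw [sub_sub_cancel_left, inner_neg_right, inner_smul_right, real_inner_self_eq_norm_sq] at h1
        have : (R - ‖x - c‖) / ‖p‖ * ‖p‖ ^ 2 = ‖p‖ * (R - ‖x - c‖) := by field_simp
        linarith
    · exact fun w => snd_deriv_nonpos (hC2at x hxD) _ hloc w
    · unfold gradient
      rw [hfd]
      exact (InnerProductSpace.toDual ℝ _).symm_apply_apply p
  choose! T hT1 hT2 using fun (x : EuclideanSpace ℝ (Fin n)) (hx : x ∈ s) =>
    grad_hasFDerivAt (hC2at x (hsD hx))
  have key := addHaar_image_le_lintegral_abs_det_fderiv volume hsm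
    (fun x hx => (hT1 x hx).hasFDerivWithinAt)
  have hvol := Measure.addHaar_ball_of_pos (volume : Measure (EuclideanSpace ℝ (Fin n))) 0
    (r := M / (2 * R)) (by positivity)
  rw [finrank_euclideanSpace_fin] at hvol
  rw [← hvol]
  calc _ ≤ _ := measure_mono hcover
    _ ≤ _ := key
    _ ≤ ∫⁻ x in s, ENNReal.ofReal (G x) ^ (n : ℝ) := by
      refine setLIntegral_mono' hsm fun x hx => ?_
      have hpsd : (-hess n v x).PosSemidef := by
        refine Matrix.PosSemidef.of_dotProduct_mulVec_nonneg ?_ ?_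
        · ext i j
          simp [hess_symm (hC2at x hx.1) i j]
        · intro w
          rw [Matrix.neg_mulVec, dotProduct_neg, star_trivial, hess_quad (hC2at x hx.1)]
          have := hx.2.2.2.2 (WithLp.toLp 2 w)
          linarith
      have h1 := hG x hx.1 hx.2.1 hx.2.2.1 hx.2.2.2.1 hpsd
      have h0 : 0 ≤ -(hess n v x).trace := by
        have := hpsd.trace_nonneg
        rwa [Matrix.trace_neg] at this
      rw [hT2 x hx, ENNReal.rpow_natCast, ← ENNReal.ofReal_pow (h0.trans h1)]
      exact ENNReal.ofReal_le_ofReal ((psd_det_bound hpsd).trans (pow_le_pow_left₀ h0 h1 n))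
    _ ≤ _ := lintegral_mono_set hsD

theorem hess_of_eventually {n : ℕ} {w : EuclideanSpace ℝ (Fin n) → ℝ} {x : EuclideanSpace ℝ (Fin n)}
    {j : Fin n} {g : EuclideanSpace ℝ (Fin n) → ℝ} {g' : EuclideanSpace ℝ (Fin n) →L[ℝ] ℝ}
    (h : ∀ᶠ y in nhds x, fderiv ℝ w y (EuclideanSpace.single j 1) = g y)
    (hg : HasFDerivAt g g' x) (i : Fin n) :
    hess n w x i j = g' (EuclideanSpace.single i 1) := by
  unfold hess
  have h2 : (fun y => fderiv ℝ w y (EuclideanSpace.single j (1:ℝ))) =ᶠ[nhds x] g := h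
  rw [h2.fderiv_eq, hg.fderiv]

theorem partial_hasFDerivAt {n : ℕ} {u : EuclideanSpace ℝ (Fin n) → ℝ} {x : EuclideanSpace ℝ (Fin n)}
    (hu : ContDiffAt ℝ 2 u x) (j : Fin n) :
    ∃ L : EuclideanSpace ℝ (Fin n) →L[ℝ] ℝ,
      HasFDerivAt (fun y => fderiv ℝ u y (EuclideanSpace.single j 1)) L x ∧
      ∀ i, L (EuclideanSpace.single i 1) = hess n u x i j := by
  have hdd : DifferentiableAt ℝ (fderiv ℝ u) x :=
    (hu.fderiv_right (m := 1) (by norm_num)).differentiableAt (by simp)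
  have : DifferentiableAt ℝ (fun y => fderiv ℝ u y (EuclideanSpace.single j (1:ℝ))) x := by
    fun_prop
  exact ⟨_, this.hasFDerivAt, fun i => rfl⟩

theorem eventually_diff {n : ℕ} {u : EuclideanSpace ℝ (Fin n) → ℝ} {x : EuclideanSpace ℝ (Fin n)}
    (hu : ContDiffAt ℝ 2 u x) : ∀ᶠ y in nhds x, DifferentiableAt ℝ u y := by
  have := hu.eventually (by simp)
  filter_upwards [this] with y hy using hy.differentiableAt (by simp)

theorem hess_sub {n : ℕ} {u w : EuclideanSpace ℝ (Fin n) → ℝ} {x : EuclideanSpace ℝ (Fin n)}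
    (hu : ContDiffAt ℝ 2 u x) (hw : ContDiffAt ℝ 2 w x) :
    hess n (fun y => u y - w y) x = hess n u x - hess n w x := by
  ext i j
  obtain ⟨L1, h1, e1⟩ := partial_hasFDerivAt hu j
  obtain ⟨L2, h2, e2⟩ := partial_hasFDerivAt hw j
  rw [hess_of_eventually (g := fun y => fderiv ℝ u y (EuclideanSpace.single j 1)
    - fderiv ℝ w y (EuclideanSpace.single j 1)) ?_ (h1.sub h2) i]
  · simp [e1, e2]
  · filter_upwards [eventually_diff hu, eventually_diff hw] with y hy1 hy2
    have h : HasFDerivAt (fun y => u y - w y) (fderiv ℝ u y - fderiv ℝ w y) y :=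
      hy1.hasFDerivAt.sub hy2.hasFDerivAt
    rw [h.fderiv]
    simp

theorem hess_mul {n : ℕ} {u w : EuclideanSpace ℝ (Fin n) → ℝ} {x : EuclideanSpace ℝ (Fin n)}
    (hu : ContDiffAt ℝ 2 u x) (hw : ContDiffAt ℝ 2 w x) (i j : Fin n) :
    hess n (fun y => u y * w y) x i j = u x * hess n w x i j + w x * hess n u x i j
      + fderiv ℝ u x (EuclideanSpace.single i 1) * fderiv ℝ w x (EuclideanSpace.single j 1)
      + fderiv ℝ w x (EuclideanSpace.single i 1) * fderiv ℝ u x (EuclideanSpace.single j 1) := by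
  obtain ⟨L1, h1, e1⟩ := partial_hasFDerivAt hu j
  obtain ⟨L2, h2, e2⟩ := partial_hasFDerivAt hw j
  have du := (hu.differentiableAt (by simp)).hasFDerivAt
  have dw := (hw.differentiableAt (by simp)).hasFDerivAt
  rw [hess_of_eventually (g := fun y => u y * fderiv ℝ w y (EuclideanSpace.single j 1)
    + w y * fderiv ℝ u y (EuclideanSpace.single j 1)) ?_ ((du.mul h2).add (dw.mul h1)) i]
  · simp [e1, e2]; ring
  · filter_upwards [eventually_diff hu, eventually_diff hw] with y hy1 hy2
    have h : HasFDerivAt (fun y => u y * w y) (u y • fderiv ℝ w y + w y • fderiv ℝ u y) y :=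
      hy1.hasFDerivAt.mul hy2.hasFDerivAt
    rw [h.fderiv]
    simp

/-- last coordinate as a continuous linear map -/
noncomputable def lastL (n : ℕ) (hn : 1 ≤ n) : EuclideanSpace ℝ (Fin n) →L[ℝ] ℝ :=
  EuclideanSpace.proj (⟨n - 1, by omega⟩ : Fin n)

theorem lastL_apply (n : ℕ) (hn : 1 ≤ n) (x : EuclideanSpace ℝ (Fin n)) :
    lastL n hn x = lastC n hn x := rfl

theorem abs_lastC_le (n : ℕ) (hn : 1 ≤ n) (x : EuclideanSpace ℝ (Fin n)) :
    |lastC n hn x| ≤ ‖x‖ := by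
  exact PiLp.norm_apply_le x (⟨n - 1, by omega⟩ : Fin n)

theorem lastL_norm (n : ℕ) (hn : 1 ≤ n) : ‖lastL n hn‖ ≤ 1 := by
  refine ContinuousLinearMap.opNorm_le_bound _ (by norm_num) fun x => ?_
  rw [one_mul, lastL_apply]; exact abs_lastC_le n hn x

/-- the quadratic barrier -/
noncomputable def quadP (n : ℕ) (hn : 1 ≤ n) (c : EuclideanSpace ℝ (Fin n)) (a β γ : ℝ)
    (x : EuclideanSpace ℝ (Fin n)) : ℝ :=
  a * lastL n hn x + β * ‖x - c‖ ^ 2 + γ * (lastL n hn x) ^ 2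

theorem quadP_contDiff (n : ℕ) (hn : 1 ≤ n) (c : EuclideanSpace ℝ (Fin n)) (a β γ : ℝ) :
    ContDiff ℝ 2 (quadP n hn c a β γ) := by
  unfold quadP
  have : ContDiff ℝ 2 (fun x : EuclideanSpace ℝ (Fin n) => ‖x - c‖ ^ 2) :=
    (contDiff_id.sub contDiff_const).norm_sq ℝ
  have h2 : ContDiff ℝ 2 (lastL n hn) := (lastL n hn).contDiff
  exact ((contDiff_const.mul h2).add (contDiff_const.mul this)).add (contDiff_const.mul (h2.pow 2))

theorem quadP_hasFDerivAt (n : ℕ) (hn : 1 ≤ n) (c : EuclideanSpace ℝ (Fin n)) (a β γ : ℝ)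
    (x : EuclideanSpace ℝ (Fin n)) :
    HasFDerivAt (quadP n hn c a β γ)
      (a • lastL n hn + (2 * β) • innerSL ℝ (x - c) + (2 * γ * lastL n hn x) • lastL n hn) x := by
  have h1 : HasFDerivAt (fun x : EuclideanSpace ℝ (Fin n) => ‖x - c‖ ^ 2)
      (2 • (innerSL ℝ (x - c))) x := by
    simpa using ((hasFDerivAt_id x).sub_const c).norm_sq
  have h2 := (lastL n hn).hasFDerivAt (x := x)
  have h3 := ((h2.const_mul a).add (h1.const_mul β)).add ((h2.pow 2).const_mul γ)
  refine h3.congr_fderiv ?_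
  ext y
  simp
  ring

theorem quadP_hess (n : ℕ) (hn : 1 ≤ n) (c : EuclideanSpace ℝ (Fin n)) (a β γ : ℝ)
    (x : EuclideanSpace ℝ (Fin n)) (i j : Fin n) :
    hess n (quadP n hn c a β γ) x i j = 2 * β * (1 : Matrix (Fin n) (Fin n) ℝ) i j
      + 2 * γ * (lastL n hn (EuclideanSpace.single i 1) * lastL n hn (EuclideanSpace.single j 1)) := by
  have hp : HasFDerivAt (fun y : EuclideanSpace ℝ (Fin n) => (y - c) j)
      (EuclideanSpace.proj j : EuclideanSpace ℝ (Fin n) →L[ℝ] ℝ) x := by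
    have := ((EuclideanSpace.proj j : EuclideanSpace ℝ (Fin n) →L[ℝ] ℝ).hasFDerivAt (x := x)).sub_const (c j)
    simpa using this
  have h2 := (lastL n hn).hasFDerivAt (x := x)
  set k := lastL n hn (EuclideanSpace.single j (1:ℝ)) with hk
  have hg : HasFDerivAt (fun y => a * k + 2 * β * (y - c) j + 2 * γ * k * lastL n hn y)
    ((2 * β) • (EuclideanSpace.proj j : EuclideanSpace ℝ (Fin n) →L[ℝ] ℝ) + (2 * γ * k) • lastL n hn) x :=
    ((hp.const_mul (2 * β)).const_add (a * k)).add (h2.const_mul (2 * γ * k))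
  rw [hess_of_eventually (Filter.Eventually.of_forall fun y => ?_) hg i]
  · simp [Matrix.one_apply, eq_comm]
    ring
  · rw [(quadP_hasFDerivAt n hn c a β γ y).fderiv]
    simp [EuclideanSpace.inner_single_right, ← hk]
    ring

theorem quadP_fderiv_norm (n : ℕ) (hn : 1 ≤ n) (c : EuclideanSpace ℝ (Fin n)) (a β γ : ℝ)
    (x : EuclideanSpace ℝ (Fin n)) :
    ‖fderiv ℝ (quadP n hn c a β γ) x‖ ≤ |a| + 2 * |β| * ‖x - c‖ + 2 * |γ| * |lastC n hn x| := by
  rw [(quadP_hasFDerivAt n hn c a β γ x).fderiv]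
  have h1 : ‖a • lastL n hn‖ ≤ |a| := by
    rw [norm_smul, Real.norm_eq_abs]
    exact mul_le_of_le_one_right (abs_nonneg _) (lastL_norm n hn)
  have h2 : ‖(2 * β) • innerSL ℝ (x - c)‖ = 2 * |β| * ‖x - c‖ := by
    rw [norm_smul, Real.norm_eq_abs, abs_mul, innerSL_apply_norm]; norm_num
  have h3 : ‖(2 * γ * lastL n hn x) • lastL n hn‖ ≤ 2 * |γ| * |lastC n hn x| := by
    rw [norm_smul, Real.norm_eq_abs]
    refine (mul_le_of_le_one_right (abs_nonneg _) (lastL_norm n hn)).trans ?_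
    rw [abs_mul, abs_mul, lastL_apply]; norm_num
  calc _ ≤ _ := norm_add₃_le
    _ ≤ _ := by linarith

theorem quadP_trace (n : ℕ) (hn : 1 ≤ n) (c : EuclideanSpace ℝ (Fin n)) (a β γ : ℝ)
    (x : EuclideanSpace ℝ (Fin n)) (A : Matrix (Fin n) (Fin n) ℝ) :
    (A * hess n (quadP n hn c a β γ) x).trace = 2 * β * A.trace
      + 2 * γ * A ⟨n - 1, by omega⟩ ⟨n - 1, by omega⟩ := by
  have : hess n (quadP n hn c a β γ) x = (2 * β) • (1 : Matrix (Fin n) (Fin n) ℝ)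
      + (2 * γ) • Matrix.single ⟨n - 1, by omega⟩ ⟨n - 1, by omega⟩ (1:ℝ) := by
    ext i j
    rw [quadP_hess]
    simp only [Matrix.add_apply, Matrix.smul_apply, smul_eq_mul, lastL_apply, lastC, Matrix.single_apply]
    simp only [PiLp.single_apply]
    congr 2
    by_cases h1 : (⟨n - 1, by omega⟩ : Fin n) = i <;> by_cases h2 : (⟨n - 1, by omega⟩ : Fin n) = j <;> simp [h1, h2]
  rw [this]
  simp [Matrix.mul_add, Matrix.trace_mul_single]
  ring

/-- `L^p` norm of an `ℝ≥0∞`-valued function on `S`. -/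
noncomputable def NN (n : ℕ) (p : ℝ) (g : EuclideanSpace ℝ (Fin n) → ℝ≥0∞)
    (S : Set (EuclideanSpace ℝ (Fin n))) : ℝ≥0∞ := (∫⁻ x in S, g x ^ p) ^ (1 / p)

theorem LpNormE_eq (n : ℕ) {p : ℝ} (hp : 0 < p) (g : EuclideanSpace ℝ (Fin n) → ℝ)
    (S : Set (EuclideanSpace ℝ (Fin n))) :
    LpNormE n p g S = NN n p (fun x => ENNReal.ofReal |g x|) S := by
  unfold LpNormE NN
  congr 2
  ext x
  rw [ENNReal.ofReal_rpow_of_nonneg (abs_nonneg _) hp.le]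

theorem NN_mono_set (n : ℕ) {p : ℝ} (hp : 0 < p) (g : EuclideanSpace ℝ (Fin n) → ℝ≥0∞)
    {S T : Set (EuclideanSpace ℝ (Fin n))} (h : S ⊆ T) : NN n p g S ≤ NN n p g T := by
  unfold NN
  exact ENNReal.rpow_le_rpow (lintegral_mono_set h) (by positivity)

theorem NN_mono (n : ℕ) {p : ℝ} (hp : 0 < p) {g h : EuclideanSpace ℝ (Fin n) → ℝ≥0∞}
    {S : Set (EuclideanSpace ℝ (Fin n))} (hS : MeasurableSet S) (hgh : ∀ x ∈ S, g x ≤ h x) :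
    NN n p g S ≤ NN n p h S := by
  unfold NN
  exact ENNReal.rpow_le_rpow (setLIntegral_mono' hS fun x hx =>
    ENNReal.rpow_le_rpow (hgh x hx) hp.le) (by positivity)

theorem NN_add (n : ℕ) {p : ℝ} (hp : 1 ≤ p) {g h : EuclideanSpace ℝ (Fin n) → ℝ≥0∞}
    {S : Set (EuclideanSpace ℝ (Fin n))} (hg : AEMeasurable g (volume.restrict S))
    (hh : AEMeasurable h (volume.restrict S)) :
    NN n p (fun x => g x + h x) S ≤ NN n p g S + NN n p h S :=
  ENNReal.lintegral_Lp_add_le hg hh hp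

theorem NN_const_mul (n : ℕ) {p : ℝ} (hp : 0 < p) {c : ℝ≥0∞} (hc : c ≠ ∞)
    (g : EuclideanSpace ℝ (Fin n) → ℝ≥0∞) (S : Set (EuclideanSpace ℝ (Fin n))) :
    NN n p (fun x => c * g x) S = c * NN n p g S := by
  unfold NN
  simp_rw [ENNReal.mul_rpow_of_nonneg _ _ hp.le]
  rw [lintegral_const_mul' _ _ (by simp [hc, hp.le]), ENNReal.mul_rpow_of_nonneg _ _ (by positivity),
    ← ENNReal.rpow_mul]
  rw [mul_one_div_cancel hp.ne', ENNReal.rpow_one]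

theorem NN_le_mul (n : ℕ) {p q : ℝ} (hp : 0 < p) (hpq : p ≤ q)
    {g : EuclideanSpace ℝ (Fin n) → ℝ≥0∞}
    {S : Set (EuclideanSpace ℝ (Fin n))} (hg : AEMeasurable g (volume.restrict S)) :
    NN n p g S ≤ NN n q g S * volume S ^ (1 / p - 1 / q) := by
  rcases hpq.eq_or_lt with rfl | hlt
  · simp
  have hr : 0 < 1 / p - 1 / q := by
    rw [sub_pos]; exact one_div_lt_one_div_of_lt hp hlt
  have := ENNReal.lintegral_Lp_mul_le_Lq_mul_Lr (p := p) (q := q) (r := 1 / (1 / p - 1 / q)) hp hlt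
    (by rw [one_div_one_div]; ring) (volume.restrict S) hg (g := fun _ => 1) aemeasurable_const
  simpa [NN] using this

theorem NN_holder (n : ℕ) {p q r : ℝ} (hp : 0 < p) (hpq : p < q) (hpqr : 1 / p = 1 / q + 1 / r)
    {g h : EuclideanSpace ℝ (Fin n) → ℝ≥0∞}
    {S : Set (EuclideanSpace ℝ (Fin n))} (hg : AEMeasurable g (volume.restrict S))
    (hh : AEMeasurable h (volume.restrict S)) :
    NN n p (fun x => g x * h x) S ≤ NN n q g S * NN n r h S :=
  ENNReal.lintegral_Lp_mul_le_Lq_mul_Lr hp hpq hpqr _ hg hh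

/-- volume of the unit ball -/
noncomputable def om (n : ℕ) : ℝ := (volume (Metric.ball (0 : EuclideanSpace ℝ (Fin n)) 1)).toReal

theorem om_pos (n : ℕ) : 0 < om n :=
  ENNReal.toReal_pos (Metric.measure_ball_pos _ _ (by norm_num)).ne' measure_ball_lt_top.ne

theorem vol_ball (n : ℕ) (c : EuclideanSpace ℝ (Fin n)) {ρ : ℝ} (hρ : 0 < ρ) :
    volume (Metric.ball c ρ) = ENNReal.ofReal (ρ ^ n * om n) := by
  rw [Measure.addHaar_ball_of_pos _ _ hρ, finrank_euclideanSpace_fin, ENNReal.ofReal_mul (by positivity), om,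
    ENNReal.ofReal_toReal measure_ball_lt_top.ne]

theorem hB_vol (n : ℕ) (hn : 1 ≤ n) (c : EuclideanSpace ℝ (Fin n)) {ρ : ℝ} (hρ : 0 < ρ) :
    volume (hB n hn c ρ) ≤ ENNReal.ofReal (ρ ^ n * om n) := by
  rw [← vol_ball n c hρ]
  refine measure_mono fun x hx => ?_
  rw [Metric.mem_ball, dist_eq_norm]; exact hx.1

/-- Passing from `L^q` to `L^p`, `p ≤ q`, on a half ball. -/
theorem NN_le_ball (n : ℕ) (hn : 1 ≤ n) (c : EuclideanSpace ℝ (Fin n)) {ρ : ℝ} (hρ : 0 < ρ)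
    {p q : ℝ} (hp : 0 < p) (hpq : p ≤ q) {g : EuclideanSpace ℝ (Fin n) → ℝ≥0∞}
    (hg : AEMeasurable g (volume.restrict (hB n hn c ρ))) :
    NN n p g (hB n hn c ρ) ≤ NN n q g (hB n hn c ρ) * ENNReal.ofReal ((ρ ^ n * om n) ^ (1 / p - 1 / q)) := by
  refine (NN_le_mul n hp hpq hg).trans (mul_le_mul_right ?_ _)
  have hr : 0 ≤ 1 / p - 1 / q := by
    rw [sub_nonneg]; exact one_div_le_one_div_of_le hp hpq
  have := om_pos n
  rw [← ENNReal.ofReal_rpow_of_nonneg (by positivity) hr]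
  exact ENNReal.rpow_le_rpow (hB_vol n hn c hρ) hr

/-- The ABP estimate in norm form. -/
theorem abp_norm (n : ℕ) (hn : 1 ≤ n) (c : EuclideanSpace ℝ (Fin n)) (R : ℝ) (hR : 0 < R)
    (v : EuclideanSpace ℝ (Fin n) → ℝ)
    (hcont : ContinuousOn v (hQ n hn c R)) (hC2 : ContDiffOn ℝ 2 v (hB n hn c R))
    (hbd : ∀ x ∈ hQ n hn c R, x ∉ hB n hn c R → v x ≤ 0)
    (M : ℝ) (hM : 0 < M) (z : EuclideanSpace ℝ (Fin n)) (hz : z ∈ hQ n hn c R) (hzM : v z = M)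
    (G : EuclideanSpace ℝ (Fin n) → ℝ)
    (hG : ∀ x ∈ hB n hn c R, 0 < v x → ‖fderiv ℝ v x‖ < M / (2 * R) →
      ‖fderiv ℝ v x‖ * (R - ‖x - c‖) ≤ v x → (-hess n v x).PosSemidef →
      -(hess n v x).trace ≤ G x) :
    ENNReal.ofReal (om n ^ (1 / (n : ℝ)) * (M / (2 * R)))
      ≤ NN n n (fun x => ENNReal.ofReal (G x)) (hB n hn c R) := by
  have h := abp n hn c R hR v hcont hC2 hbd M hM z hz hzM G hG
  have hn0 : (0:ℝ) < n := by exact_mod_cast hn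
  have ho := om_pos n
  have h1 := ENNReal.rpow_le_rpow h (z := 1 / (n:ℝ)) (by positivity)
  refine le_trans (le_of_eq ?_) h1
  have : volume (Metric.ball (0 : EuclideanSpace ℝ (Fin n)) 1) = ENNReal.ofReal (om n) := by
    rw [om, ENNReal.ofReal_toReal measure_ball_lt_top.ne]
  rw [this, ← ENNReal.ofReal_mul (by positivity), ENNReal.ofReal_rpow_of_nonneg (by positivity) (by positivity)]
  congr 1
  rw [Real.mul_rpow (by positivity) ho.le, ← Real.rpow_natCast, ← Real.rpow_mul (by positivity),
    mul_one_div_cancel hn0.ne', Real.rpow_one]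
  ring

theorem bdry_step (n : ℕ) (hn : 1 ≤ n) (lam Lam : ℝ) (hlam : 0 < lam) (hLam : lam ≤ Lam)
    (q : ℝ) (hq : (n : ℝ) < q) (c : EuclideanSpace ℝ (Fin n)) (hc : lastC n hn c = 0)
    (ρ : ℝ) (hρ : 0 < ρ) (b f u : EuclideanSpace ℝ (Fin n) → ℝ)
    (hb : ContinuousOn b (hB n hn c ρ)) (hf : ContinuousOn f (hB n hn c ρ))
    (hb0 : ∀ x ∈ hB n hn c ρ, 0 ≤ b x)
    (hu : ContinuousOn u (hQ n hn c ρ)) (hu2 : ContDiffOn ℝ 2 u (hB n hn c ρ))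
    (hpde : ∀ x ∈ hB n hn c ρ, -f x ≤ pucciPlus n lam Lam (hess n u x) + b x * gradNorm n u x)
    (hflat : ∀ x ∈ hQ n hn c ρ, lastC n hn x = 0 → u x ≤ 0)
    (a t F K : ℝ) (ha : 0 ≤ a) (ht : 0 ≤ t) (hF : 0 ≤ F) (hK : 0 ≤ K)
    (hut : ∀ x ∈ hQ n hn c ρ, u x ≤ a * lastC n hn x + t)
    (hNf : NN n q (fun x => ENNReal.ofReal (max (f x) 0)) (hB n hn c ρ) ≤ ENNReal.ofReal F)
    (hNb : NN n q (fun x => ENNReal.ofReal (b x)) (hB n hn c ρ) ≤ ENNReal.ofReal K)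
    (E A : ℝ) (hE : E = (ρ ^ n * om n) ^ (1 / (n:ℝ) - 1 / q) / (lam * om n ^ (1 / (n:ℝ))))
    (hA : A = n * Lam / lam) (hEK : E * K ≤ 1 / 2) (z : EuclideanSpace ℝ (Fin n))
    (hz : z ∈ hB n hn c ρ) :
    u z ≤ a * lastC n hn z + t * (‖z - c‖ ^ 2 / ρ ^ 2 + A * lastC n hn z / ρ)
      + 4 * ρ * (E * (F + K * (a + (2 + 3 * A) * t / ρ))) := by
  have hn0 : (0:ℝ) < n := by exact_mod_cast hn
  have ho := om_pos n
  have hLam0 : 0 < Lam := hlam.trans_le hLam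
  have hA0 : 0 < A := by rw [hA]; positivity
  have hE0 : 0 ≤ E := by rw [hE]; positivity
  have hlastc : ∀ x, lastC n hn (x - c) = lastC n hn x := by
    intro x
    have : lastC n hn (x - c) = lastC n hn x - lastC n hn c := rfl
    rw [this, hc, sub_zero]
  have hlast_le : ∀ x, |lastC n hn x| ≤ ‖x - c‖ := fun x => by
    rw [← hlastc]; exact abs_lastC_le n hn _
  set P := quadP n hn c (a + t * A / ρ) (t / ρ ^ 2) (-(t * A / ρ ^ 2)) with hP
  have hPx : ∀ x, P x = a * lastC n hn x + t * (‖x - c‖ ^ 2 / ρ ^ 2)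
      + t * A * ((lastC n hn x / ρ) * (1 - lastC n hn x / ρ)) := by
    intro x
    simp only [hP, quadP, lastL_apply]
    field_simp
    ring
  set v : EuclideanSpace ℝ (Fin n) → ℝ := fun y => u y - P y with hv
  have hPc := quadP_contDiff n hn c (a + t * A / ρ) (t / ρ ^ 2) (-(t * A / ρ ^ 2))
  rw [← hP] at hPc
  have hPle : ∀ x ∈ hB n hn c ρ, P x ≤ a * lastC n hn x
      + t * (‖x - c‖ ^ 2 / ρ ^ 2 + A * lastC n hn x / ρ) := by
    intro x hx
    rw [hPx]
    have h1 : 0 ≤ t * A * (lastC n hn x / ρ) ^ 2 := by positivity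
    have : a * lastC n hn x
      + t * (‖x - c‖ ^ 2 / ρ ^ 2 + A * lastC n hn x / ρ) - (a * lastC n hn x + t * (‖x - c‖ ^ 2 / ρ ^ 2)
      + t * A * ((lastC n hn x / ρ) * (1 - lastC n hn x / ρ))) = t * A * (lastC n hn x / ρ) ^ 2 := by ring
    linarith
  suffices hmain : v z ≤ 4 * ρ * (E * (F + K * (a + (2 + 3 * A) * t / ρ))) by
    have := hPle z hz
    have h2 : v z = u z - P z := rfl
    linarith
  by_contra hcon
  push Not at hcon
  set m := v z with hm
  have hm0 : 0 < m := lt_of_le_of_lt (by positivity) hcon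
  have hDo := hB_isOpen n hn c ρ
  have hbd : ∀ x ∈ hQ n hn c ρ, x ∉ hB n hn c ρ → v x ≤ 0 := by
    intro x hx hxn
    have hxl : lastC n hn x ≤ ρ := (le_abs_self _).trans ((hlast_le x).trans hx.1)
    have hq1 : lastC n hn x / ρ ≤ 1 := by rw [div_le_one hρ]; exact hxl
    have hq0 : 0 ≤ lastC n hn x / ρ := div_nonneg hx.2 hρ.le
    have h3 : 0 ≤ t * A * ((lastC n hn x / ρ) * (1 - lastC n hn x / ρ)) :=
      mul_nonneg (mul_nonneg ht hA0.le) (mul_nonneg hq0 (by linarith))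
    have h4 : v x = u x - (a * lastC n hn x + t * (‖x - c‖ ^ 2 / ρ ^ 2)
      + t * A * ((lastC n hn x / ρ) * (1 - lastC n hn x / ρ))) := by rw [← hPx]
    rcases hx.2.eq_or_lt with h0 | h0
    · have h5 := hflat x hx h0.symm
      have h6 : 0 ≤ t * (‖x - c‖ ^ 2 / ρ ^ 2) := by positivity
      have h7 : 0 ≤ a * lastC n hn x := mul_nonneg ha hx.2
      linarith
    · have h5 : ‖x - c‖ = ρ := by
        refine le_antisymm hx.1 ?_
        by_contra h
        exact hxn ⟨by linarith, h0⟩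
      have h6 : ‖x - c‖ ^ 2 / ρ ^ 2 = 1 := by rw [h5]; field_simp
      rw [h6] at h4
      have := hut x hx
      linarith
  set L := a + (2 + 3 * A) * t / ρ + m / (2 * ρ) with hL
  have hL0 : 0 ≤ L := by positivity
  have key := abp_norm n hn c ρ hρ v (hu.sub hPc.continuous.continuousOn)
    (hu2.sub hPc.contDiffOn) hbd m hm0 z (hB_subset_hQ _ _ _ _ hz) rfl
    (fun x => (1 / lam) * (max (f x) 0 + L * b x)) (by
      intro x hx hvx hgrad _ hpsd
      have hux : ContDiffAt ℝ 2 u x := hu2.contDiffAt (hDo.mem_nhds hx)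
      have hPcx : ContDiffAt ℝ 2 P x := hPc.contDiffAt
      have hH : hess n v x = hess n u x - hess n P x := hess_sub hux hPcx
      have hDP : ‖fderiv ℝ P x‖ ≤ a + (2 + 3 * A) * t / ρ := by
        refine (quadP_fderiv_norm n hn c _ _ _ x).trans ?_
        rw [abs_of_nonneg (by positivity : 0 ≤ a + t * A / ρ), abs_of_nonneg (by positivity : 0 ≤ t / ρ ^ 2),
          abs_neg, abs_of_nonneg (by positivity : 0 ≤ t * A / ρ ^ 2)]
        have h1 : ‖x - c‖ ≤ ρ := hx.1.le
        have h2 : |lastC n hn x| ≤ ρ := (hlast_le x).trans h1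
        have h3 : 2 * (t / ρ ^ 2) * ‖x - c‖ ≤ 2 * (t / ρ ^ 2) * ρ := by gcongr
        have h4 : 2 * (t * A / ρ ^ 2) * |lastC n hn x| ≤ 2 * (t * A / ρ ^ 2) * ρ := by gcongr
        calc _ ≤ a + t * A / ρ + 2 * (t / ρ ^ 2) * ρ + 2 * (t * A / ρ ^ 2) * ρ := by linarith
          _ = _ := by field_simp; ring
      have hDu : gradNorm n u x ≤ L := by
        have h1 : fderiv ℝ v x = fderiv ℝ u x - fderiv ℝ P x :=
          fderiv_fun_sub (hux.differentiableAt (by simp)) (hPcx.differentiableAt (by simp))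
        have h2 : fderiv ℝ u x = fderiv ℝ v x + fderiv ℝ P x := by rw [h1]; abel
        unfold gradNorm
        rw [h2]
        refine (norm_add_le _ _).trans ?_
        rw [hL]; linarith
      have hbL : b x * gradNorm n u x ≤ L * b x := by
        rw [mul_comm]; exact mul_le_mul_of_nonneg_right hDu (hb0 x hx)
      have : lam * (-(hess n v x).trace) ≤ max (f x) 0 + L * b x := by
        refine le_of_forall_pos_le_add fun ε hε => ?_
        obtain ⟨B, hB1, hB2, hB3, hB4⟩ := pucci_exists hLam
          (t := -f x - b x * gradNorm n u x) (by linarith [hpde x hx]) hε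
        have h1 := lam_trace_le hB2 hpsd
        have h2 : (B * hess n v x).trace = (B * hess n u x).trace - (B * hess n P x).trace := by
          rw [hH, Matrix.mul_sub, Matrix.trace_sub]
        have h3 : (B * hess n P x).trace ≤ 0 := by
          rw [hP, quadP_trace]
          have d1 : ∀ i, lam ≤ B i i := fun i => by
            have := hB2.diag_nonneg (i := i); simpa using this
          have d2 : ∀ i, B i i ≤ Lam := fun i => by
            have := hB3.diag_nonneg (i := i); simpa using this
          have d3 : B.trace ≤ n * Lam := by
            calc B.trace = ∑ i, B i i := rfl
              _ ≤ ∑ i : Fin n, Lam := Finset.sum_le_sum fun i _ => d2 i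
              _ = _ := by simp
          have d4 : n * Lam ≤ A * B ⟨n - 1, by omega⟩ ⟨n - 1, by omega⟩ := by
            calc n * Lam = A * lam := by rw [hA]; field_simp
              _ ≤ _ := mul_le_mul_of_nonneg_left (d1 _) hA0.le
          have d5 : 0 ≤ t / ρ ^ 2 := by positivity
          have d6 : 2 * (t / ρ ^ 2) * B.trace + 2 * (-(t * A / ρ ^ 2)) * B ⟨n - 1, by omega⟩ ⟨n - 1, by omega⟩
            = 2 * (t / ρ ^ 2) * (B.trace - A * B ⟨n - 1, by omega⟩ ⟨n - 1, by omega⟩) := by ring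
          rw [d6]
          exact mul_nonpos_of_nonneg_of_nonpos (by positivity) (by linarith)
        linarith [le_max_left (f x) 0]
      calc -(hess n v x).trace = (1 / lam) * (lam * (-(hess n v x).trace)) := by field_simp
        _ ≤ _ := mul_le_mul_of_nonneg_left this (by positivity))
  have hDm : MeasurableSet (hB n hn c ρ) := hDo.measurableSet
  have mf : AEMeasurable (fun x => ENNReal.ofReal (max (f x) 0)) (volume.restrict (hB n hn c ρ)) :=
    ((hf.sup continuousOn_const).aemeasurable hDm).ennreal_ofReal
  have mb : AEMeasurable (fun x => ENNReal.ofReal (b x)) (volume.restrict (hB n hn c ρ)) :=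
    (hb.aemeasurable hDm).ennreal_ofReal
  have hn1 : (1:ℝ) ≤ n := by exact_mod_cast hn
  set E1 := (ρ ^ n * om n) ^ (1 / (n:ℝ) - 1 / q) with hE1
  have hE10 : 0 ≤ E1 := by positivity
  have key2 : ENNReal.ofReal (om n ^ (1 / (n : ℝ)) * (m / (2 * ρ)))
      ≤ ENNReal.ofReal ((1 / lam) * (F * E1 + L * (K * E1))) := by
    refine key.trans ?_
    calc _ ≤ NN n n (fun x => ENNReal.ofReal (1 / lam) * (ENNReal.ofReal (max (f x) 0)
              + ENNReal.ofReal L * ENNReal.ofReal (b x))) (hB n hn c ρ) := by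
            refine NN_mono n hn0 hDm fun x hx => le_of_eq ?_
            rw [ENNReal.ofReal_mul (by positivity), ENNReal.ofReal_add (by positivity)
              (mul_nonneg hL0 (hb0 x hx)), ENNReal.ofReal_mul hL0]
      _ = ENNReal.ofReal (1 / lam) * NN n n (fun x => ENNReal.ofReal (max (f x) 0)
              + ENNReal.ofReal L * ENNReal.ofReal (b x)) (hB n hn c ρ) :=
            NN_const_mul n hn0 ENNReal.ofReal_ne_top _ _
      _ ≤ ENNReal.ofReal (1 / lam) * (NN n n (fun x => ENNReal.ofReal (max (f x) 0)) (hB n hn c ρ)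
              + NN n n (fun x => ENNReal.ofReal L * ENNReal.ofReal (b x)) (hB n hn c ρ)) := by
            gcongr
            exact NN_add n hn1 mf (mb.const_mul _)
      _ = ENNReal.ofReal (1 / lam) * (NN n n (fun x => ENNReal.ofReal (max (f x) 0)) (hB n hn c ρ)
              + ENNReal.ofReal L * NN n n (fun x => ENNReal.ofReal (b x)) (hB n hn c ρ)) := by
            rw [NN_const_mul n hn0 ENNReal.ofReal_ne_top]
      _ ≤ ENNReal.ofReal (1 / lam) * (ENNReal.ofReal F * ENNReal.ofReal E1
              + ENNReal.ofReal L * (ENNReal.ofReal K * ENNReal.ofReal E1)) := by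
            gcongr
            · exact (NN_le_ball n hn c hρ hn0 hq.le mf).trans (by gcongr)
            · exact (NN_le_ball n hn c hρ hn0 hq.le mb).trans (by gcongr)
      _ = _ := by
            rw [← ENNReal.ofReal_mul hF, ← ENNReal.ofReal_mul hK, ← ENNReal.ofReal_mul hL0,
              ← ENNReal.ofReal_add (by positivity) (by positivity), ← ENNReal.ofReal_mul (by positivity)]
  have key3 := (ENNReal.ofReal_le_ofReal_iff (by positivity)).mp key2
  have hκ : 0 < om n ^ (1 / (n : ℝ)) := by positivity
  have key4 : m / (2 * ρ) ≤ E * (F + L * K) := by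
    have h1 : m / (2 * ρ) = (om n ^ (1 / (n : ℝ)) * (m / (2 * ρ))) / om n ^ (1 / (n : ℝ)) := by
      field_simp
    have h2 : E * (F + L * K) = ((1 / lam) * (F * E1 + L * (K * E1))) / om n ^ (1 / (n : ℝ)) := by
      rw [hE]; field_simp
    rw [h1, h2]
    gcongr
  have h5 : E * (F + L * K) = E * (F + K * (a + (2 + 3 * A) * t / ρ)) + E * K * (m / (2 * ρ)) := by
    rw [hL]; ring
  have h6 : E * K * (m / (2 * ρ)) ≤ 1 / 2 * (m / (2 * ρ)) := by gcongr
  have h7 : m = m / (2 * ρ) * (2 * ρ) := by field_simp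
  have h8 : m / (2 * ρ) ≤ 2 * (E * (F + K * (a + (2 + 3 * A) * t / ρ))) := by linarith
  have h9 := mul_le_mul_of_nonneg_right h8 (by positivity : 0 ≤ 2 * ρ)
  linarith

set_option maxHeartbeats 4000000 in
theorem bdry_iter (n : ℕ) (hn : 1 ≤ n) (lam Lam : ℝ) (hlam : 0 < lam) (hLam : lam ≤ Lam)
    (q : ℝ) (hq : (n : ℝ) < q) (K dmax : ℝ) (hK : 0 < K) (hd : 0 < dmax) (hd1 : dmax ≤ 1) :
    ∃ ρ0 C : ℝ, 0 < ρ0 ∧ ρ0 ≤ dmax ∧ 0 < C ∧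
    ∀ (c : EuclideanSpace ℝ (Fin n)) (_ : lastC n hn c = 0)
    (b f u : EuclideanSpace ℝ (Fin n) → ℝ)
    (_ : ContinuousOn b (hB n hn c ρ0)) (_ : ContinuousOn f (hB n hn c ρ0))
    (_ : ∀ x ∈ hB n hn c ρ0, 0 ≤ b x)
    (_ : ContinuousOn u (hQ n hn c ρ0)) (_ : ContDiffOn ℝ 2 u (hB n hn c ρ0))
    (_ : ∀ x ∈ hB n hn c ρ0, -f x ≤ pucciPlus n lam Lam (hess n u x) + b x * gradNorm n u x)
    (_ : ∀ x ∈ hQ n hn c ρ0, lastC n hn x = 0 → u x ≤ 0)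
    (N : ℝ) (_ : 0 ≤ N) (_ : ∀ x ∈ hQ n hn c ρ0, u x ≤ N)
    (_ : NN n q (fun x => ENNReal.ofReal (max (f x) 0)) (hB n hn c ρ0) ≤ ENNReal.ofReal N)
    (_ : NN n q (fun x => ENNReal.ofReal (b x)) (hB n hn c ρ0) ≤ ENNReal.ofReal K)
    (x : EuclideanSpace ℝ (Fin n)) (_ : x ∈ hB n hn c ρ0) (_ : ‖x - c‖ = lastC n hn x),
    u x ≤ C * N * lastC n hn x := by
  have hn0 : (0:ℝ) < n := by exact_mod_cast hn
  have hq0 : 0 < q := hn0.trans hq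
  have ho := om_pos n
  have hLam0 : 0 < Lam := hlam.trans_le hLam
  set A : ℝ := n * Lam / lam with hA
  have hA0 : 0 < A := by rw [hA]; positivity
  set α : ℝ := 1 - n / q with hα
  have hα0 : 0 < α := by rw [hα, sub_pos, div_lt_one hq0]; exact hq
  have hα1 : α < 1 := by rw [hα]; have : 0 < n / q := by positivity
                         linarith
  set E0 : ℝ := om n ^ (1 / (n:ℝ) - 1 / q) / (lam * om n ^ (1 / (n:ℝ))) with hE0
  have hE00 : 0 < E0 := by rw [hE0]; positivity
  set τ : ℝ := (1 / 4 : ℝ) ^ (α / 2) with hτ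
  have hτ0 : 0 < τ := by positivity
  have hτ1 : τ < 1 := Real.rpow_lt_one (by norm_num) (by norm_num) (by positivity)
  have hτ2 : 1 / 2 ≤ τ := by
    have h1 : (1 / 4 : ℝ) ^ (1 / 2 : ℝ) ≤ τ :=
      Real.rpow_le_rpow_of_exponent_ge (by norm_num) (by norm_num) (by linarith)
    have h2 : (1 / 4 : ℝ) ^ (1 / 2 : ℝ) = 1 / 2 := by
      rw [← Real.sqrt_eq_rpow, show (1/4 : ℝ) = (1/2) ^ 2 by norm_num]
      exact Real.sqrt_sq (by norm_num)
    linarith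
  set W : ℝ := A / (1 - τ) with hW
  have hW0 : 0 < W := div_pos hA0 (by linarith)
  set X : ℝ := 4 * E0 * (1 + K * (W + 2 + 3 * A)) with hX
  have hX0 : 0 < X := by positivity
  set ρ0 : ℝ := min dmax ((1 / (16 * X)) ^ (1 / α)) with hρ0
  have hρpos : 0 < ρ0 := lt_min hd (by positivity)
  have hρ1 : ρ0 ≤ 1 := (min_le_left _ _).trans hd1
  have hρX : ρ0 ^ α * X ≤ 1 / 16 := by
    have h1 : ρ0 ^ α ≤ 1 / (16 * X) := by
      calc ρ0 ^ α ≤ ((1 / (16 * X)) ^ (1 / α)) ^ α :=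
            Real.rpow_le_rpow hρpos.le (min_le_right _ _) hα0.le
        _ = _ := by rw [← Real.rpow_mul (by positivity), one_div_mul_cancel hα0.ne', Real.rpow_one]
    calc ρ0 ^ α * X ≤ 1 / (16 * X) * X := by gcongr
      _ = 1 / 16 := by field_simp
  refine ⟨ρ0, W / ρ0 + 4 / ρ0, hρpos, min_le_left _ _, by positivity, ?_⟩
  intro c hc b f u hb hf hb0 hu hu2 hpde hflat N hN huN hNf hNb x hx hxs
  -- the dyadic claim
  have claim : ∀ k : ℕ, ∀ z ∈ hQ n hn c (ρ0 * (1 / 4) ^ k),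
      u z ≤ W * N / ρ0 * (1 - τ ^ k) * lastC n hn z + N * (τ / 4) ^ k := by
    intro k
    induction k with
    | zero =>
      intro z hz
      simp at hz
      simpa using huN z hz
    | succ k ih =>
      intro z hz
      set ρ := ρ0 * (1 / 4) ^ k with hρ
      have hρp : 0 < ρ := by positivity
      have hρle : ρ ≤ ρ0 := mul_le_of_le_one_right hρpos.le (pow_le_one₀ (by norm_num) (by norm_num))
      have hρs : ρ0 * (1 / 4) ^ (k + 1) = ρ / 4 := by rw [hρ]; ring
      rw [hρs] at hz
      have hτk : 0 < τ ^ k := by positivity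
      have hτk1 : τ ^ k ≤ 1 := pow_le_one₀ hτ0.le hτ1.le
      have hsub : hB n hn c ρ ⊆ hB n hn c ρ0 := fun y hy => ⟨hy.1.trans_le hρle, hy.2⟩
      have hsubQ : hQ n hn c ρ ⊆ hQ n hn c ρ0 := fun y hy => ⟨hy.1.trans hρle, hy.2⟩
      have ha' : ∀ k : ℕ, 0 ≤ W * N / ρ0 * (1 - τ ^ k) := fun k =>
        mul_nonneg (by positivity) (by linarith [pow_le_one₀ hτ0.le hτ1.le (n := k)])
      rcases hz.2.eq_or_lt with h0 | h0
      · have h1 := hflat z (hsubQ ⟨by linarith [hz.1], hz.2⟩) h0.symm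
        have h2 : 0 ≤ N * (τ / 4) ^ (k + 1) := by positivity
        have h3 := mul_nonneg (ha' (k+1)) hz.2
        linarith
      have hzB : z ∈ hB n hn c ρ := ⟨by linarith [hz.1], h0⟩
      set E : ℝ := E0 * (ρ0 ^ α * (τ ^ k) ^ 2) with hE
      have hEeq : E = (ρ ^ n * om n) ^ (1 / (n:ℝ) - 1 / q) / (lam * om n ^ (1 / (n:ℝ))) := by
        have h1 : (ρ ^ n) ^ (1 / (n:ℝ) - 1 / q) = ρ ^ α := by
          rw [← Real.rpow_natCast, ← Real.rpow_mul hρp.le, hα]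
          congr 1
          field_simp
        have h2 : ((1 / 4 : ℝ) ^ k) ^ α = (τ ^ k) ^ 2 := by
          have h3 : τ ^ 2 = (1 / 4 : ℝ) ^ α := by
            rw [hτ, ← Real.rpow_mul_natCast (by norm_num : (0:ℝ) ≤ 1 / 4)]
            congr 1
            push_cast
            ring
          rw [← pow_mul, mul_comm k 2, pow_mul, h3]
          exact (Real.rpow_pow_comm (by norm_num) _ _).symm
        rw [Real.mul_rpow (by positivity) ho.le, h1, hρ, Real.mul_rpow hρpos.le (by positivity), h2, hE, hE0]
        ring
      have hρα : 0 < ρ0 ^ α := by positivity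
      have hEK : E * K ≤ 1 / 2 := by
        have h1 : E * K ≤ E0 * (ρ0 ^ α * 1) * K := by
          rw [hE]; gcongr; exact pow_le_one₀ hτk.le hτk1
        have h2 : ρ0 ^ α * (4 * E0 * (K * 2)) ≤ ρ0 ^ α * X := by
          rw [hX]; gcongr; nlinarith [mul_pos hK hW0, mul_pos hK hA0]
        nlinarith
      have step := bdry_step n hn lam Lam hlam hLam q hq c hc ρ hρp b f u (hb.mono hsub) (hf.mono hsub)
        (fun y hy => hb0 y (hsub hy)) (hu.mono hsubQ) (hu2.mono hsub) (fun y hy => hpde y (hsub hy))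
        (fun y hy => hflat y (hsubQ hy)) (W * N / ρ0 * (1 - τ ^ k)) (N * (τ / 4) ^ k) N K
        (ha' k) (by positivity) hN hK.le ih
        ((NN_mono_set n hq0 _ hsub).trans hNf) ((NN_mono_set n hq0 _ hsub).trans hNb)
        E A hEeq hA hEK z hzB
      refine step.trans ?_
      -- algebra
      have hz4 : ‖z - c‖ ^ 2 / ρ ^ 2 ≤ 1 / 16 := by
        have h1 : ‖z - c‖ ≤ ρ / 4 := hz.1
        rw [div_le_iff₀ (by positivity)]
        calc ‖z - c‖ ^ 2 ≤ (ρ / 4) ^ 2 := pow_le_pow_left₀ (norm_nonneg _) h1 2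
          _ = _ := by ring
      have ht0 : 0 ≤ N * (τ / 4) ^ k := by positivity
      have e1 : N * (τ / 4) ^ k * (‖z - c‖ ^ 2 / ρ ^ 2) ≤ N * (τ / 4) ^ k * (1 / 16) := by gcongr
      have hWA : W * (1 - τ) = A := by rw [hW]; exact div_mul_cancel₀ _ (by linarith)
      have e2 : N * (τ / 4) ^ k * (A * lastC n hn z / ρ)
          = W * N / ρ0 * (τ ^ k - τ ^ (k+1)) * lastC n hn z := by
        rw [← hWA, hρ, div_pow, pow_succ, one_div, inv_pow]
        field_simp
      have e3 : 4 * ρ * (E * (N + K * (W * N / ρ0 * (1 - τ ^ k) + (2 + 3 * A) * (N * (τ / 4) ^ k) / ρ)))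
          ≤ N * (τ / 4) ^ k * (1 / 16) := by
        have g1 : W * N / ρ0 * (1 - τ ^ k) ≤ W * N / ρ0 := 
          mul_le_of_le_one_right (by positivity) (by linarith)
        have g2 : (2 + 3 * A) * (N * (τ / 4) ^ k) / ρ ≤ (2 + 3 * A) * N / ρ0 := by
          have : (2 + 3 * A) * (N * (τ / 4) ^ k) / ρ = (2 + 3 * A) * N / ρ0 * τ ^ k := by
            rw [hρ, div_pow, one_div, inv_pow]; field_simp
          rw [this]
          exact mul_le_of_le_one_right (by positivity) hτk1
        have g3 : N ≤ N / ρ0 := by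
          rw [le_div_iff₀ hρpos]; exact mul_le_of_le_one_right hN hρ1
        have hE0' : 0 ≤ E := by rw [hE]; positivity
        calc _ ≤ 4 * ρ * (E * (N / ρ0 + K * (W * N / ρ0 + (2 + 3 * A) * N / ρ0))) := by gcongr
          _ = (ρ0 ^ α * X) * (N * (τ ^ k * (1 / 4) ^ k)) * τ ^ k := by
            rw [hE, hX, hρ]; field_simp; ring
          _ ≤ (1 / 16) * (N * (τ ^ k * (1 / 4) ^ k)) * 1 := by gcongr
          _ = _ := by rw [div_pow, div_pow, one_pow]; ring
      have e4 : N * (τ / 4) ^ k * (1 / 16) + N * (τ / 4) ^ k * (1 / 16) ≤ N * (τ / 4) ^ (k + 1) := by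
        have : N * (τ / 4) ^ (k + 1) = N * (τ / 4) ^ k * (τ / 4) := by ring
        rw [this, ← mul_add]
        exact mul_le_mul_of_nonneg_left (by linarith) ht0
      have e5 : W * N / ρ0 * (1 - τ ^ (k+1)) * lastC n hn z = W * N / ρ0 * (1 - τ ^ k) * lastC n hn z
          + W * N / ρ0 * (τ ^ k - τ ^ (k+1)) * lastC n hn z := by ring
      rw [e5, mul_add (N * (τ / 4) ^ k), e2]
      linarith
  set s := lastC n hn x with hs
  have hs0 : 0 < s := hx.2
  have hsρ : s < ρ0 := by rw [← hxs]; exact hx.1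
  obtain ⟨k, hk1, hk2⟩ := exists_nat_pow_near_of_lt_one (x := s / ρ0) (y := (1 / 4 : ℝ))
    (by positivity) (by rw [div_le_one hρpos]; exact hsρ.le) (by norm_num) (by norm_num)
  have h1 := claim k x ⟨by
    rw [hxs]; rw [div_le_iff₀ hρpos] at hk2; linarith, hs0.le⟩
  rw [← hs] at h1
  have h2 : W * N / ρ0 * (1 - τ ^ k) * s ≤ W * N / ρ0 * s := by
    gcongr
    exact mul_le_of_le_one_right (by positivity) (by linarith [pow_pos hτ0 k])
  have h3 : (τ / 4) ^ k ≤ 4 * (s / ρ0) := by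
    calc (τ / 4) ^ k ≤ (1 / 4) ^ k := by gcongr
      _ = 4 * (1 / 4) ^ (k + 1) := by ring
      _ ≤ _ := by linarith
  have h4 := mul_le_mul_of_nonneg_left h3 hN
  calc u x ≤ W * N / ρ0 * s + N * (4 * (s / ρ0)) := by linarith
    _ = _ := by ring

/-- `σ(x) = 9/4 - |x|²`. -/
noncomputable def sg (n : ℕ) (x : EuclideanSpace ℝ (Fin n)) : ℝ := 9 / 4 - ‖x‖ ^ 2

theorem sg_contDiff (n : ℕ) : ContDiff ℝ 2 (sg n) :=
  contDiff_const.sub (contDiff_id.norm_sq ℝ)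

theorem sg_hasFDerivAt (n : ℕ) (x : EuclideanSpace ℝ (Fin n)) :
    HasFDerivAt (sg n) ((-2 : ℝ) • innerSL ℝ x) x := by
  have h1 : HasFDerivAt (fun x : EuclideanSpace ℝ (Fin n) => ‖x‖ ^ 2) (2 • (innerSL ℝ x)) x := by
    simpa using (hasFDerivAt_id x).norm_sq
  have h2 := h1.const_sub (9 / 4)
  refine h2.congr_fderiv ?_
  ext y
  simp

theorem eta_hasFDerivAt (n m : ℕ) (x : EuclideanSpace ℝ (Fin n)) :
    HasFDerivAt (fun y => sg n y ^ (m + 1)) ((-2 * (m + 1 : ℝ) * sg n x ^ m) • innerSL ℝ x) x := by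
  refine ((sg_hasFDerivAt n x).pow (m + 1)).congr_fderiv ?_
  ext y
  simp
  ring

theorem eta_hess (n m : ℕ) (x : EuclideanSpace ℝ (Fin n)) (i j : Fin n) :
    hess n (fun y => sg n y ^ (m + 2)) x i j =
      -2 * (m + 2 : ℝ) * (sg n x ^ (m + 1) * (1 : Matrix (Fin n) (Fin n) ℝ) i j
        + -2 * (m + 1 : ℝ) * sg n x ^ m * (x i * x j)) := by
  have hp : HasFDerivAt (fun y : EuclideanSpace ℝ (Fin n) => y j)
      (EuclideanSpace.proj j : EuclideanSpace ℝ (Fin n) →L[ℝ] ℝ) x :=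
    (EuclideanSpace.proj j : EuclideanSpace ℝ (Fin n) →L[ℝ] ℝ).hasFDerivAt
  have hg := ((eta_hasFDerivAt n m x).mul hp).const_mul (-2 * (m + 2 : ℝ))
  rw [hess_of_eventually (Filter.Eventually.of_forall fun y => ?_) hg i]
  · simp [Matrix.one_apply, EuclideanSpace.inner_single_right, eq_comm]
    by_cases h : i = j
    · simp [h]; ring
    · simp [h]; left; ring
  · rw [(eta_hasFDerivAt n (m + 1) y).fderiv]
    simp [EuclideanSpace.inner_single_right]
    ring

theorem trace_bound {n : ℕ} {A H : Matrix (Fin n) (Fin n) ℝ} {Lam h : ℝ} (hL : 0 ≤ Lam)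
    (hA : ∀ i j, |A i j| ≤ Lam) (hH : ∀ i j, |H i j| ≤ h) : |(A * H).trace| ≤ n ^ 2 * (Lam * h) := by
  simp only [Matrix.trace, Matrix.diag_apply, Matrix.mul_apply]
  calc |∑ i, ∑ j, A i j * H j i| ≤ ∑ i, |∑ j, A i j * H j i| := Finset.abs_sum_le_sum_abs _ _
    _ ≤ ∑ i, ∑ j, |A i j * H j i| := Finset.sum_le_sum fun i _ => Finset.abs_sum_le_sum_abs _ _
    _ ≤ ∑ i : Fin n, ∑ j : Fin n, Lam * h := Finset.sum_le_sum fun i _ => Finset.sum_le_sum fun j _ => by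
        rw [abs_mul]; exact mul_le_mul (hA i j) (hH j i) (abs_nonneg _) hL
    _ = _ := by simp; ring

theorem lmp_pointwise (n m : ℕ) (lam Lam : ℝ) (hlam : 0 < lam) (hLam : lam ≤ Lam)
    (x : EuclideanSpace ℝ (Fin n)) (hx : ‖x‖ < 3 / 2) (u : EuclideanSpace ℝ (Fin n) → ℝ)
    (hux : ContDiffAt ℝ 2 u x) (hu0 : 0 < u x) (b f : ℝ) (hb : 0 ≤ b)
    (hpde : -f ≤ pucciPlus n lam Lam (hess n u x) + b * gradNorm n u x)
    (hgrad : ‖fderiv ℝ (fun y => sg n y ^ (m + 2) * u y) x‖ * (3 / 2 - ‖x‖) ≤ sg n x ^ (m + 2) * u x)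
    (hpsd : (-hess n (fun y => sg n y ^ (m + 2) * u y) x).PosSemidef) :
    lam * (-(hess n (fun y => sg n y ^ (m + 2) * u y) x).trace) ≤
      sg n x ^ (m + 2) * max f 0 + (3 + 3 * (m + 2 : ℝ)) * b * (sg n x ^ (m + 1) * u x)
      + n ^ 2 * (Lam * ((9 * (m + 2 : ℝ) ^ 2 + 18 * (m + 2 : ℝ) * (1 + (m + 2 : ℝ))) * (sg n x ^ m * u x))) := by
  have hLam0 : 0 < Lam := hlam.trans_le hLam
  set σ := sg n x with hσ
  have hσe : σ = 9 / 4 - ‖x‖ ^ 2 := rfl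
  have hx0 := norm_nonneg x
  have hσ0 : 0 < σ := by rw [hσe]; nlinarith
  have hσ1 : σ ≤ 9 / 4 := by rw [hσe]; nlinarith
  have hσ3 : σ ≤ 3 * (3 / 2 - ‖x‖) := by rw [hσe]; nlinarith
  set B : ℝ := (m : ℝ) + 2 with hB
  have hm0 : (0:ℝ) ≤ m := by positivity
  have hB2 : 2 ≤ B := by rw [hB]; linarith
  set η : EuclideanSpace ℝ (Fin n) → ℝ := fun y => sg n y ^ (m + 2) with hη
  have hηc : ContDiffAt ℝ 2 η x := ((sg_contDiff n).pow (m + 2)).contDiffAt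
  have hηx : η x = σ ^ (m + 2) := rfl
  have hDη : ‖fderiv ℝ η x‖ ≤ 3 * B * σ ^ (m + 1) := by
    have h1 : fderiv ℝ η x = _ := (eta_hasFDerivAt n (m + 1) x).fderiv
    rw [h1, norm_smul, innerSL_apply_norm, Real.norm_eq_abs, ← hσ, abs_mul, abs_mul, abs_of_pos (pow_pos hσ0 _)]
    push_cast
    rw [abs_of_nonneg (by linarith : (0:ℝ) ≤ (m:ℝ) + 1 + 1)]
    norm_num
    have h2 : (m:ℝ) + 1 + 1 = B := by rw [hB]; ring
    rw [h2]
    have h3 : 0 ≤ 2 * B * σ ^ (m+1) := by positivity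
    nlinarith
  have hηu := fderiv_mul (hηc.differentiableAt (by simp)) (hux.differentiableAt (by simp))
  set V := σ ^ (m + 1) * u x with hV
  have hV0 : 0 < V := by positivity
  have hDv : ‖fderiv ℝ (fun y => η y * u y) x‖ ≤ 3 * V := by
    have h1 : ‖fderiv ℝ (fun y => η y * u y) x‖ * σ ≤ 3 * (σ ^ (m + 2) * u x) := by
      have := mul_le_mul_of_nonneg_left hσ3 (norm_nonneg (fderiv ℝ (fun y => η y * u y) x))
      linarith
    have h2 : 3 * (σ ^ (m + 2) * u x) = 3 * V * σ := by rw [hV]; ring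
    rw [h2] at h1
    exact le_of_mul_le_mul_right h1 hσ0
  have hDu : σ ^ (m + 2) * gradNorm n u x ≤ (3 + 3 * B) * V := by
    have h1 : σ ^ (m + 2) • fderiv ℝ u x = fderiv ℝ (fun y => η y * u y) x - u x • fderiv ℝ η x := by
      rw [eq_sub_iff_add_eq]; exact hηu.symm
    have h2 : σ ^ (m + 2) * gradNorm n u x = ‖σ ^ (m + 2) • fderiv ℝ u x‖ := by
      rw [norm_smul, Real.norm_eq_abs, abs_of_pos (pow_pos hσ0 _)]; rfl
    rw [h2, h1]
    refine (norm_sub_le _ _).trans ?_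
    rw [norm_smul, Real.norm_eq_abs, abs_of_pos hu0]
    have h3 := mul_le_mul_of_nonneg_left hDη hu0.le
    have h4 : u x * (3 * B * σ ^ (m + 1)) = 3 * B * V := by rw [hV]; ring
    linarith
  have hDuη : gradNorm n u x * ‖fderiv ℝ η x‖ ≤ 3 * B * (3 + 3 * B) * (σ ^ m * u x) := by
    have h1 : gradNorm n u x * ‖fderiv ℝ η x‖ ≤ gradNorm n u x * (3 * B * σ ^ (m + 1)) :=
      mul_le_mul_of_nonneg_left hDη (norm_nonneg _)
    have h2 : (gradNorm n u x * (3 * B * σ ^ (m + 1))) * σ ≤ (3 * B * (3 + 3 * B) * (σ ^ m * u x)) * σ := by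
      have := mul_le_mul_of_nonneg_left hDu (by positivity : 0 ≤ 3 * B)
      calc _ = 3 * B * (σ ^ (m + 2) * gradNorm n u x) := by ring
        _ ≤ _ := this
        _ = _ := by rw [hV]; ring
    exact h1.trans (le_of_mul_le_mul_right h2 hσ0)
  have hsingle : ∀ (L : EuclideanSpace ℝ (Fin n) →L[ℝ] ℝ) (i : Fin n),
      |L (EuclideanSpace.single i 1)| ≤ ‖L‖ := by
    intro L i
    have := L.le_opNorm (EuclideanSpace.single i 1)
    simpa using this
  have hHη : ∀ i j, |hess n η x i j| ≤ 9 * B ^ 2 * σ ^ m := by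
    intro i j
    rw [hη, eta_hess, ← hσ]
    have h1 : |(1 : Matrix (Fin n) (Fin n) ℝ) i j| ≤ 1 := by
      rw [Matrix.one_apply]; split_ifs <;> simp
    have h2 : |x i * x j| ≤ 9 / 4 := by
      rw [abs_mul]
      have a1 : |x i| ≤ ‖x‖ := PiLp.norm_apply_le x i
      have a2 : |x j| ≤ ‖x‖ := PiLp.norm_apply_le x j
      calc |x i| * |x j| ≤ (3/2) * (3/2) :=
            mul_le_mul (a1.trans hx.le) (a2.trans hx.le) (abs_nonneg _) (by norm_num)
        _ = _ := by norm_num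
    have h3 : |σ ^ (m + 1) * (1 : Matrix (Fin n) (Fin n) ℝ) i j| ≤ 9 / 4 * σ ^ m := by
      rw [abs_mul, abs_of_pos (pow_pos hσ0 _)]
      calc _ ≤ σ ^ (m + 1) * 1 := by gcongr
        _ = σ * σ ^ m := by ring
        _ ≤ _ := by gcongr
    have h4 : |-2 * ((m:ℝ) + 1) * σ ^ m * (x i * x j)| ≤ 9 / 2 * (m + 1 : ℝ) * σ ^ m := by
      rw [abs_mul, abs_mul, abs_mul, abs_of_pos (pow_pos hσ0 _), abs_of_nonneg (by linarith : (0:ℝ) ≤ (m:ℝ) + 1)]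
      calc _ ≤ |(-2:ℝ)| * (m + 1 : ℝ) * σ ^ m * (9 / 4) := by gcongr
        _ = _ := by norm_num; ring
    rw [abs_mul, abs_mul, ← hB, abs_of_pos (by linarith : 0 < B)]
    calc _ ≤ |(-2 : ℝ)| * B * (9 / 4 * σ ^ m + 9 / 2 * (m + 1 : ℝ) * σ ^ m) := by
          gcongr
          exact (abs_add_le _ _).trans (add_le_add h3 h4)
      _ = 9 * B * (m + 3 / 2 : ℝ) * σ ^ m := by norm_num; ring
      _ ≤ 9 * B * B * σ ^ m := by gcongr; rw [hB]; linarith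
      _ = _ := by ring
  set w := (9 * B ^ 2 + 18 * B * (1 + B)) * (σ ^ m * u x) with hw
  refine le_of_forall_pos_le_add fun ε hε => ?_
  have hσm : 0 < σ ^ (m + 2) := pow_pos hσ0 _
  obtain ⟨A, hA1, hA2, hA3, hA4⟩ := pucci_exists hLam (t := -f - b * gradNorm n u x) (by linarith)
    (div_pos hε hσm)
  have h1 := lam_trace_le hA2 hpsd
  set Em : Matrix (Fin n) (Fin n) ℝ := hess n (fun y => η y * u y) x - σ ^ (m + 2) • hess n u x with hEm
  have h2 : (A * hess n (fun y => η y * u y) x).trace = σ ^ (m + 2) * (A * hess n u x).trace + (A * Em).trace := by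
    rw [hEm, Matrix.mul_sub, Matrix.trace_sub, Matrix.mul_smul, Matrix.trace_smul, smul_eq_mul]; ring
  have h3 : |(A * Em).trace| ≤ n ^ 2 * (Lam * w) := by
    refine trace_bound hLam0.le (fun i j => psd_entry_bound hlam hA1 hA2 hA3 i j) fun i j => ?_
    have e1 : Em i j = u x * hess n η x i j
      + fderiv ℝ η x (EuclideanSpace.single i 1) * fderiv ℝ u x (EuclideanSpace.single j 1)
      + fderiv ℝ u x (EuclideanSpace.single i 1) * fderiv ℝ η x (EuclideanSpace.single j 1) := by
      simp only [hEm, Matrix.sub_apply, Matrix.smul_apply, smul_eq_mul]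
      rw [hess_mul hηc hux]
      rw [hηx]; ring
    rw [e1]
    refine (abs_add_three _ _ _).trans ?_
    rw [abs_mul, abs_mul, abs_mul, abs_of_pos hu0]
    have f1 := mul_le_mul_of_nonneg_left (hHη i j) hu0.le
    have f2 : |fderiv ℝ η x (EuclideanSpace.single i 1)| * |fderiv ℝ u x (EuclideanSpace.single j 1)|
        ≤ ‖fderiv ℝ η x‖ * gradNorm n u x :=
      mul_le_mul (hsingle _ _) (hsingle _ _) (abs_nonneg _) (norm_nonneg _)
    have f3 : |fderiv ℝ u x (EuclideanSpace.single i 1)| * |fderiv ℝ η x (EuclideanSpace.single j 1)|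
        ≤ gradNorm n u x * ‖fderiv ℝ η x‖ :=
      mul_le_mul (hsingle _ _) (hsingle _ _) (abs_nonneg _) (norm_nonneg _)
    rw [hw]
    linarith
  have h4 := mul_le_mul_of_nonneg_left hA4 hσm.le
  have h5 : σ ^ (m + 2) * (-f - b * gradNorm n u x - ε / σ ^ (m + 2))
      = -(σ ^ (m + 2) * f) - b * (σ ^ (m + 2) * gradNorm n u x) - ε := by
    field_simp
  have h6 := mul_le_mul_of_nonneg_left hDu hb
  have h7 := mul_le_mul_of_nonneg_left (le_max_left f 0) hσm.le
  have h8 := neg_abs_le (A * Em).trace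
  linarith

theorem interp_bound (m : ℕ) (s σ t M : ℝ) (hσ : 0 < σ) (hσ1 : σ ≤ 9 / 4) (ht : 0 < t) (hs1 : s ≤ 1)
    (hms : 2 ≤ (m + 2 : ℝ) * s) (hM : σ ^ (m + 2) * t ≤ M) :
    σ ^ m * t ≤ (9 / 4 : ℝ) ^ ((m + 2 : ℝ) * s - 2) * (M ^ (1 - s) * t ^ s) := by
  have hv : 0 < σ ^ (m + 2) * t := by positivity
  have h1 : σ ^ m * t = (σ ^ (m + 2) * t) ^ (1 - s) * (σ ^ ((m + 2 : ℝ) * s - 2) * t ^ s) := by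
    rw [Real.mul_rpow (by positivity) ht.le, ← Real.rpow_natCast, ← Real.rpow_natCast, ← Real.rpow_mul hσ.le]
    have e1 : σ ^ (((m + 2 : ℕ) : ℝ) * (1 - s)) * t ^ (1 - s) * (σ ^ ((m + 2 : ℝ) * s - 2) * t ^ s)
        = (σ ^ (((m + 2 : ℕ) : ℝ) * (1 - s)) * σ ^ ((m + 2 : ℝ) * s - 2)) * (t ^ (1 - s) * t ^ s) := by ring
    rw [e1, ← Real.rpow_add hσ, ← Real.rpow_add ht]
    congr 2
    · push_cast; ring
    · rw [sub_add_cancel, Real.rpow_one]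
  rw [h1]
  calc _ ≤ M ^ (1 - s) * ((9 / 4 : ℝ) ^ ((m + 2 : ℝ) * s - 2) * t ^ s) := by
        have := hv.trans_le hM
        gcongr
    _ = _ := by ring

theorem absorb (C F U M s : ℝ) (hC : 0 < C) (hF : 0 ≤ F) (hU : 0 ≤ U) (hM : 0 < M) (hs : 0 < s) (hs1 : s ≤ 1)
    (h : M ≤ C * (F + M ^ (1 - s) * U ^ s)) : M ≤ (1 + (2 * C) ^ (1 / s)) * (F + U) := by
  have hD : 0 < (2 * C) ^ (1 / s) := by positivity
  have hN : 0 ≤ F + U := by positivity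
  by_cases hMN : M ≤ F + U
  · calc M ≤ F + U := hMN
      _ ≤ _ := le_mul_of_one_le_left hN (by linarith)
  push Not at hMN
  set N := F + U with hNd
  have h1 : N ≤ M ^ (1 - s) * N ^ s := by
    calc N = N ^ (1 - s) * N ^ s := by
          rcases hN.eq_or_lt with h0 | h0
          · rw [← h0, Real.zero_rpow hs.ne', mul_zero]
          · rw [← Real.rpow_add h0, sub_add_cancel, Real.rpow_one]
      _ ≤ _ := by gcongr
  have h2 : M ^ (1 - s) * U ^ s ≤ M ^ (1 - s) * N ^ s := by gcongr; linarith
  have hMs : M = M ^ (1 - s) * M ^ s := by rw [← Real.rpow_add hM, sub_add_cancel, Real.rpow_one]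
  have h3 : M ^ (1 - s) * M ^ s ≤ M ^ (1 - s) * (2 * C * N ^ s) := by
    rw [← hMs]
    calc M ≤ C * (F + M ^ (1 - s) * U ^ s) := h
      _ ≤ C * (M ^ (1 - s) * N ^ s + M ^ (1 - s) * N ^ s) := by gcongr; linarith
      _ = _ := by ring
  have h4 : M ^ s ≤ 2 * C * N ^ s := le_of_mul_le_mul_left h3 (by positivity)
  have h5 : M ≤ (2 * C) ^ (1 / s) * N := by
    have := Real.rpow_le_rpow (by positivity) h4 (by positivity : 0 ≤ 1 / s)
    rwa [Real.mul_rpow (by positivity) (by positivity), ← Real.rpow_mul hM.le, ← Real.rpow_mul hN,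
      mul_one_div_cancel hs.ne', Real.rpow_one, Real.rpow_one] at this
  linarith [mul_comm N 1]

theorem NN_pow (n : ℕ) {r s k : ℝ} (hr : 0 < r) (hk : 0 < k) (hs : s = r / k)
    (g : EuclideanSpace ℝ (Fin n) → ℝ) (hg : ∀ x, 0 ≤ g x)
    (S : Set (EuclideanSpace ℝ (Fin n))) :
    NN n k (fun x => ENNReal.ofReal (g x ^ s)) S
      = ((∫⁻ y in S, ENNReal.ofReal (g y ^ r)) ^ (1 / r)) ^ s := by
  unfold NN
  rw [← ENNReal.rpow_mul]
  congr 1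
  · congr 1
    ext x
    rw [ENNReal.ofReal_rpow_of_nonneg (Real.rpow_nonneg (hg x) _) hk.le, ← Real.rpow_mul (hg x), hs,
      div_mul_cancel₀ _ hk.ne']
  · rw [hs]; field_simp

set_option maxHeartbeats 2000000 in
theorem lmp (n : ℕ) (hn : 1 ≤ n) (lam Lam : ℝ) (hlam : 0 < lam) (hLam : lam ≤ Lam)
    (p q K r : ℝ) (hq : (n : ℝ) < q) (hp : (n : ℝ) ≤ p) (hK : 0 < K) (hr : 0 < r) :
    ∃ C : ℝ, 0 < C ∧
    ∀ (b f u : EuclideanSpace ℝ (Fin n) → ℝ)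
    (_ : ContinuousOn b (hB n hn 0 (3 / 2))) (_ : ContinuousOn f (hB n hn 0 (3 / 2)))
    (_ : ∀ x ∈ hB n hn 0 (3 / 2), 0 ≤ b x)
    (_ : ContinuousOn u (hQ n hn 0 (3 / 2))) (_ : ContDiffOn ℝ 2 u (hB n hn 0 (3 / 2)))
    (_ : ∀ x ∈ hB n hn 0 (3 / 2), -f x ≤ pucciPlus n lam Lam (hess n u x) + b x * gradNorm n u x)
    (_ : ∀ x ∈ hQ n hn 0 (3 / 2), lastC n hn x = 0 → u x ≤ 0)
    (F U : ℝ) (_ : 0 ≤ F) (_ : 0 ≤ U)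
    (_ : NN n p (fun x => ENNReal.ofReal (max (f x) 0)) (hB n hn 0 (3 / 2)) ≤ ENNReal.ofReal F)
    (_ : NN n q (fun x => ENNReal.ofReal (b x)) (hB n hn 0 (3 / 2)) ≤ ENNReal.ofReal K)
    (_ : (∫⁻ y in hB n hn 0 (3 / 2), ENNReal.ofReal ((max (u y) 0) ^ r)) ^ (1 / r) ≤ ENNReal.ofReal U)
    (x : EuclideanSpace ℝ (Fin n)) (_ : x ∈ hQ n hn 0 (5 / 4)),
    u x ≤ C * (F + U) := by
  have hn0 : (0:ℝ) < n := by exact_mod_cast hn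
  have hn1 : (1:ℝ) ≤ n := by exact_mod_cast hn
  have hq0 : 0 < q := hn0.trans hq
  have ho := om_pos n
  have hLam0 : 0 < Lam := hlam.trans_le hLam
  -- exponents
  set k : ℝ := q * n / (q - n) + r with hk
  have hqn : 0 < q - n := by linarith
  have hk1 : (n:ℝ) < q * n / (q - n) := by rw [lt_div_iff₀ hqn]; nlinarith
  have hkn : (n:ℝ) < k := by linarith
  have hk0 : 0 < k := by linarith
  have hrk : r < k := by linarith
  set s : ℝ := r / k with hs
  have hs0 : 0 < s := by positivity
  have hs1 : s ≤ 1 := by rw [hs, div_le_one hk0]; exact hrk.le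
  have hkn' : 0 < k - n := by linarith
  set q' : ℝ := n * k / (k - n) with hq'
  have hnq' : (n:ℝ) < q' := by rw [hq', lt_div_iff₀ hkn']; nlinarith
  have hq'0 : 0 < q' := hn0.trans hnq'
  have hq'q : q' ≤ q := by
    rw [hq', div_le_iff₀ hkn']
    have : q * n ≤ k * (q - n) := by
      rw [hk, add_mul, div_mul_cancel₀ _ hqn.ne']; nlinarith
    nlinarith
  have hhol : 1 / (n:ℝ) = 1 / q' + 1 / k := by
    rw [hq']; field_simp; ring
  obtain ⟨m, hm⟩ := exists_nat_ge (2 / s)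
  have hms : 2 ≤ (m + 2 : ℝ) * s := by
    rw [div_le_iff₀ hs0] at hm; nlinarith
  set B : ℝ := (m : ℝ) + 2 with hBd
  have hB0 : 0 < B := by positivity
  set D9 : ℝ := (9 / 4 : ℝ) ^ (B * s - 2) with hD9
  have hD90 : 0 < D9 := by positivity
  set a1 : ℝ := (3 + 3 * B) * (9 / 4) with ha1
  set a2 : ℝ := n ^ 2 * (Lam * (9 * B ^ 2 + 18 * B * (1 + B))) with ha2
  have ha10 : 0 < a1 := by positivity
  have ha20 : 0 < a2 := by positivity
  set D : ℝ := (a1 + a2) * D9 with hD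
  have hD0 : 0 < D := by positivity
  set C0 : ℝ := (9 / 4 : ℝ) ^ (m + 2) with hC0
  have hC00 : 0 < C0 := by positivity
  set vol : ℝ := (3 / 2 : ℝ) ^ n * om n with hvol
  have hvol0 : 0 < vol := by positivity
  set e1 : ℝ := vol ^ (1 / (n:ℝ) - 1 / p) with he1
  set e2 : ℝ := vol ^ (1 / q') + K * vol ^ (1 / q' - 1 / q) with he2
  have he10 : 0 < e1 := by positivity
  have he20 : 0 < e2 := by positivity
  set κ : ℝ := om n ^ (1 / (n : ℝ)) with hκ
  have hκ0 : 0 < κ := by positivity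
  set C1 : ℝ := 3 / κ * (1 / lam) * (C0 * e1 + D * e2) with hC1
  have hC10 : 0 < C1 := by positivity
  refine ⟨(1 + (2 * C1) ^ (1 / s)) / (11 / 16) ^ (m + 2), by positivity, ?_⟩
  intro b f u hb hf hb0 hu hu2 hpde hflat F U hF hU hNf hNb hNu x hx
  have hFU : 0 ≤ F + U := by positivity
  by_cases hux0 : u x ≤ 0
  · exact hux0.trans (by positivity)
  push Not at hux0
  set v : EuclideanSpace ℝ (Fin n) → ℝ := fun y => sg n y ^ (m + 2) * u y with hv
  have hηc : Continuous (fun y : EuclideanSpace ℝ (Fin n) => sg n y ^ (m + 2)) :=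
    (sg_contDiff n).continuous.pow _
  have hvc : ContinuousOn v (hQ n hn 0 (3 / 2)) := hηc.continuousOn.mul hu
  have hDo := hB_isOpen n hn 0 (3 / 2)
  have hv2 : ContDiffOn ℝ 2 v (hB n hn 0 (3 / 2)) := ((sg_contDiff n).pow _).contDiffOn.mul hu2
  have hxQ : x ∈ hQ n hn 0 (3 / 2) := ⟨by linarith [hx.1], hx.2⟩
  obtain ⟨z, hz, hzmax⟩ := (hQ_isCompact n hn 0 (3 / 2)).exists_isMaxOn ⟨x, hxQ⟩ hvc
  have hzmax' : ∀ y ∈ hQ n hn 0 (3 / 2), v y ≤ v z := fun y hy => hzmax hy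
  have hsx : 11 / 16 ≤ sg n x := by
    have h1 : ‖x‖ ≤ 5 / 4 := by simpa using hx.1
    have h2 := norm_nonneg x
    unfold sg; nlinarith
  have hvx : (11 / 16) ^ (m + 2) * u x ≤ v z := by
    refine le_trans ?_ (hzmax' x hxQ)
    simp only [hv]
    gcongr
  set M := v z with hM
  have hM0 : 0 < M := lt_of_lt_of_le (by positivity) hvx
  suffices hmain : M ≤ (1 + (2 * C1) ^ (1 / s)) * (F + U) by
    rw [div_mul_eq_mul_div, le_div_iff₀ (by positivity)]
    linarith
  refine absorb C1 F U M s hC10 hF hU hM0 hs0 hs1 ?_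
  have hbd : ∀ y ∈ hQ n hn 0 (3 / 2), y ∉ hB n hn 0 (3 / 2) → v y ≤ 0 := by
    intro y hy hyn
    have h1 : ‖y‖ ≤ 3 / 2 := by simpa using hy.1
    rcases hy.2.eq_or_lt with h0 | h0
    · have h3 : 0 ≤ sg n y := by unfold sg; nlinarith [norm_nonneg y]
      exact mul_nonpos_of_nonneg_of_nonpos (by positivity) (hflat y hy h0.symm)
    · have h5 : ‖y‖ = 3 / 2 := by
        refine le_antisymm h1 ?_
        by_contra h
        exact hyn ⟨by simpa using h, h0⟩
      have h6 : sg n y = 0 := by unfold sg; rw [h5]; norm_num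
      simp [hv, h6]
  have hMs : 0 < M ^ (1 - s) := by positivity
  have key := abp_norm n hn 0 (3 / 2) (by norm_num) v hvc hv2 hbd M hM0 z hz rfl
    (fun y => (1 / lam) * (C0 * max (f y) 0 + D * M ^ (1 - s) * ((1 + b y) * (max (u y) 0) ^ s))) (by
      intro y hy hvy hg1 hg2 hpsd
      have hy1 : ‖y‖ < 3 / 2 := by simpa using hy.1
      have hσ0 : 0 < sg n y := by unfold sg; nlinarith [norm_nonneg y]
      have hσ1 : sg n y ≤ 9 / 4 := by unfold sg; nlinarith [norm_nonneg y]
      have huy : 0 < u y := by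
        have : 0 < sg n y ^ (m + 2) * u y := hvy
        exact pos_of_mul_pos_right this (by positivity)
      have hpt := lmp_pointwise n m lam Lam hlam hLam y hy1 u (hu2.contDiffAt (hDo.mem_nhds hy)) huy
        (b y) (f y) (hb0 y hy) (hpde y hy) (by simpa using hg2) hpsd
      have hint := interp_bound m s (sg n y) (u y) M hσ0 hσ1 huy hs1 hms
        (hzmax' y (hB_subset_hQ _ _ _ _ hy))
      rw [← hBd] at hpt hint
      rw [← hD9] at hint
      set X := sg n y ^ m * u y with hX
      have hX0 : 0 < X := by positivity
      have hby := hb0 y hy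
      have g1 : sg n y ^ (m + 1) * u y ≤ 9 / 4 * X := by
        have : sg n y ^ (m + 1) * u y = sg n y * X := by rw [hX]; ring
        rw [this]; gcongr
      have g2 : sg n y ^ (m + 2) * max (f y) 0 ≤ C0 * max (f y) 0 := by
        rw [hC0]; gcongr
      have g3 : (3 + 3 * B) * b y * (sg n y ^ (m + 1) * u y) ≤ a1 * b y * X := by
        calc _ ≤ (3 + 3 * B) * b y * (9 / 4 * X) := by gcongr
          _ = _ := by rw [ha1]; ring
      have g4 : a1 * b y * X + a2 * X ≤ (a1 + a2) * (1 + b y) * X := by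
        have : (a1 + a2) * (1 + b y) * X = a1 * b y * X + a2 * X + (a1 * X + a2 * b y * X) := by ring
        rw [this]
        have : 0 ≤ a1 * X + a2 * b y * X := by positivity
        linarith
      have g5 : (a1 + a2) * (1 + b y) * X ≤ (a1 + a2) * (1 + b y) * (D9 * (M ^ (1 - s) * u y ^ s)) := by
        gcongr
      have g6 : (a1 + a2) * (1 + b y) * (D9 * (M ^ (1 - s) * u y ^ s))
          = D * M ^ (1 - s) * ((1 + b y) * (max (u y) 0) ^ s) := by
        rw [max_eq_left huy.le, hD]; ring
      have g7 : (n:ℝ) ^ 2 * (Lam * ((9 * B ^ 2 + 18 * B * (1 + B)) * X)) = a2 * X := by rw [ha2]; ring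
      have g8 : lam * (-(hess n v y).trace)
          ≤ C0 * max (f y) 0 + D * M ^ (1 - s) * ((1 + b y) * (max (u y) 0) ^ s) := by
        rw [← g6]
        rw [g7] at hpt
        linarith
      calc -(hess n v y).trace = (1 / lam) * (lam * (-(hess n v y).trace)) := by field_simp
        _ ≤ _ := mul_le_mul_of_nonneg_left g8 (by positivity))
  set S := hB n hn 0 (3 / 2) with hS
  have hDm : MeasurableSet S := hDo.measurableSet
  have mf : AEMeasurable (fun x => ENNReal.ofReal (max (f x) 0)) (volume.restrict S) :=
    ((hf.sup continuousOn_const).aemeasurable hDm).ennreal_ofReal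
  have mb : AEMeasurable (fun x => ENNReal.ofReal (b x)) (volume.restrict S) :=
    (hb.aemeasurable hDm).ennreal_ofReal
  have mu : AEMeasurable (fun x => ENNReal.ofReal ((max (u x) 0) ^ s)) (volume.restrict S) := by
    have h1 : ContinuousOn (fun x => (max (u x) 0) ^ s) S :=
      ((hu2.continuousOn).sup continuousOn_const).rpow_const fun x _ => Or.inr hs0.le
    exact (h1.aemeasurable hDm).ennreal_ofReal
  have hone : NN n q' (fun _ => (1:ℝ≥0∞)) S ≤ ENNReal.ofReal (vol ^ (1 / q')) := by
    unfold NN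
    simp only [ENNReal.one_rpow, lintegral_const, one_mul, Measure.restrict_apply_univ]
    rw [← ENNReal.ofReal_rpow_of_pos hvol0]
    exact ENNReal.rpow_le_rpow (hB_vol n hn 0 (by norm_num)) (by positivity)
  have h1b : NN n q' (fun x => 1 + ENNReal.ofReal (b x)) S ≤ ENNReal.ofReal e2 := by
    refine (NN_add n (by linarith) aemeasurable_const mb).trans ?_
    rw [he2, ENNReal.ofReal_add (by positivity) (by positivity), ENNReal.ofReal_mul hK.le]
    gcongr
    exact (NN_le_ball n hn 0 (by norm_num) hq'0 hq'q mb).trans (by gcongr)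
  have hus : NN n k (fun x => ENNReal.ofReal ((max (u x) 0) ^ s)) S ≤ ENNReal.ofReal (U ^ s) := by
    rw [NN_pow n hr hk0 hs (fun x => max (u x) 0) (fun x => le_max_right _ _),
      ← ENNReal.ofReal_rpow_of_nonneg hU hs0.le]
    exact ENNReal.rpow_le_rpow hNu hs0.le
  have key2 : ENNReal.ofReal (κ * (M / (2 * (3 / 2))))
      ≤ ENNReal.ofReal ((1 / lam) * (C0 * (F * e1) + D * M ^ (1 - s) * (e2 * U ^ s))) := by
    refine key.trans ?_
    calc _ ≤ NN n n (fun x => ENNReal.ofReal (1 / lam) * (ENNReal.ofReal C0 * ENNReal.ofReal (max (f x) 0)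
              + ENNReal.ofReal (D * M ^ (1 - s)) * ((1 + ENNReal.ofReal (b x))
                * ENNReal.ofReal ((max (u x) 0) ^ s)))) S := by
            refine NN_mono n hn0 hDm fun x hx => le_of_eq ?_
            have h1 : 0 ≤ (max (u x) 0) ^ s := by positivity
            have h2 := hb0 x hx
            rw [ENNReal.ofReal_mul (by positivity), ENNReal.ofReal_add (by positivity)
              (by positivity), ENNReal.ofReal_mul hC00.le, ENNReal.ofReal_mul (p := D * M ^ (1 - s)) (by positivity),
              ENNReal.ofReal_mul (p := 1 + b x) (by positivity), ENNReal.ofReal_add (by norm_num) h2, ENNReal.ofReal_one]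
      _ = ENNReal.ofReal (1 / lam) * NN n n (fun x => ENNReal.ofReal C0 * ENNReal.ofReal (max (f x) 0)
              + ENNReal.ofReal (D * M ^ (1 - s)) * ((1 + ENNReal.ofReal (b x))
                * ENNReal.ofReal ((max (u x) 0) ^ s))) S :=
            NN_const_mul n hn0 ENNReal.ofReal_ne_top _ _
      _ ≤ ENNReal.ofReal (1 / lam) * (NN n n (fun x => ENNReal.ofReal C0 * ENNReal.ofReal (max (f x) 0)) S
              + NN n n (fun x => ENNReal.ofReal (D * M ^ (1 - s)) * ((1 + ENNReal.ofReal (b x))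
                * ENNReal.ofReal ((max (u x) 0) ^ s))) S) := by
            gcongr
            exact NN_add n hn1 (mf.const_mul _) (((mb.const_add 1).mul mu).const_mul _)
      _ = ENNReal.ofReal (1 / lam) * (ENNReal.ofReal C0 * NN n n (fun x => ENNReal.ofReal (max (f x) 0)) S
              + ENNReal.ofReal (D * M ^ (1 - s)) * NN n n (fun x => (1 + ENNReal.ofReal (b x))
                * ENNReal.ofReal ((max (u x) 0) ^ s)) S) := by
            rw [NN_const_mul n hn0 ENNReal.ofReal_ne_top, NN_const_mul n hn0 ENNReal.ofReal_ne_top]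
      _ ≤ ENNReal.ofReal (1 / lam) * (ENNReal.ofReal C0 * (ENNReal.ofReal F * ENNReal.ofReal e1)
              + ENNReal.ofReal (D * M ^ (1 - s)) * (ENNReal.ofReal e2 * ENNReal.ofReal (U ^ s))) := by
            gcongr
            · exact (NN_le_ball n hn 0 (by norm_num) hn0 hp mf).trans (by gcongr)
            · exact (NN_holder n hn0 hnq' hhol (mb.const_add 1) mu).trans (by gcongr)
      _ = _ := by
            rw [← ENNReal.ofReal_mul hF, ← ENNReal.ofReal_mul hC00.le, ← ENNReal.ofReal_mul he20.le,
              ← ENNReal.ofReal_mul (by positivity),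
              ← ENNReal.ofReal_add (by positivity) (by positivity), ← ENNReal.ofReal_mul (by positivity)]
  have key3 := (ENNReal.ofReal_le_ofReal_iff (by positivity)).mp key2
  have key4 : M ≤ 3 / κ * ((1 / lam) * (C0 * (F * e1) + D * M ^ (1 - s) * (e2 * U ^ s))) := by
    have h1 : M = 3 / κ * (κ * (M / (2 * (3 / 2)))) := by field_simp
    calc M = 3 / κ * (κ * (M / (2 * (3 / 2)))) := h1
      _ ≤ _ := by gcongr
  refine key4.trans ?_
  have hUs : 0 ≤ U ^ s := by positivity
  have h9 : C0 * (F * e1) + D * M ^ (1 - s) * (e2 * U ^ s)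
      ≤ (C0 * e1 + D * e2) * (F + M ^ (1 - s) * U ^ s) := by
    have : (C0 * e1 + D * e2) * (F + M ^ (1 - s) * U ^ s) = C0 * (F * e1) + D * M ^ (1 - s) * (e2 * U ^ s)
      + (C0 * e1 * (M ^ (1 - s) * U ^ s) + D * e2 * F) := by ring
    rw [this]
    have : 0 ≤ C0 * e1 * (M ^ (1 - s) * U ^ s) + D * e2 * F := by positivity
    linarith
  calc _ ≤ 3 / κ * ((1 / lam) * ((C0 * e1 + D * e2) * (F + M ^ (1 - s) * U ^ s))) := by gcongr
    _ = _ := by rw [hC1]; ring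

theorem ofReal_max_div {u t C N : ℝ} (ht : 0 < t) (hC : 0 ≤ C) (hN : 0 ≤ N) (h : u ≤ C * N * t) :
    max u 0 / t ≤ C * N := by
  rw [div_le_iff₀ ht]
  exact max_le h (by positivity)

/-- Boundary local maximum principle in half-balls. -/
theorem boundary_local_maximum_principle
    (n : ℕ) (hn : 2 ≤ n) (lam Lam : ℝ) (hlam : 0 < lam) (hLam : lam ≤ Lam)
    (p q d0 K r : ℝ) (hq : (n : ℝ) < q) (hp : (n : ℝ) ≤ p) (hpq : p ≤ q)
    (hd0 : 0 < d0) (hd0' : d0 ≤ 1 / 4) (hK : 0 < K) (hr : 0 < r) :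
    ∃ C : ℝ, 0 < C ∧
      ∀ b f u : EuclideanSpace ℝ (Fin n) → ℝ,
        ContinuousOn b (halfBall n (by omega) 2) →
        ContinuousOn f (halfBall n (by omega) 2) →
        (∀ x ∈ halfBall n (by omega) 2, 0 ≤ b x) →
        LpNormE n q b (halfBall n (by omega) 2) ≤ ENNReal.ofReal K →
        ContinuousOn u (halfBall n (by omega) 2 ∪ flatB n (by omega) 2) →
        ContDiffOn ℝ 2 u (halfBall n (by omega) 2) →
        (∀ x ∈ halfBall n (by omega) 2,
          -f x ≤ pucciPlus n lam Lam (hess n u x) + b x * gradNorm n u x) →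
        (∀ x ∈ flatB n (by omega : 1 ≤ n) 2, u x ≤ 0) →
        ∀ x ∈ halfBall n (by omega : 1 ≤ n) 1,
          ENNReal.ofReal (max (u x) 0 / lastC n (by omega) x)
            ≤ ENNReal.ofReal C *
              ((∫⁻ y in halfBall n (by omega) (3 / 2),
                  ENNReal.ofReal ((max (u y) 0) ^ r)) ^ (1 / r)
                + LpqNormHB n (by omega) p q d0 2 (fun y => max (f y) 0)) := by
  have hn' : 1 ≤ n := by omega
  have hn0 : (0:ℝ) < n := by exact_mod_cast hn'
  have hq0 : 0 < q := hn0.trans hq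
  have hp0 : 0 < p := hn0.trans_le hp
  obtain ⟨ρ0, Cb, hρ0, hρd, hCb, hbdry⟩ := bdry_iter n hn' lam Lam hlam hLam q hq K d0 hK hd0 (by linarith)
  obtain ⟨Cl, hCl, hlmp⟩ := lmp n hn' lam Lam hlam hLam p q K r hq hp hK hr
  refine ⟨(Cb + 1 / ρ0) * (Cl + 1), by positivity, ?_⟩
  intro b f u hb hf hb0 hNb hu hu2 hpde hflat x hx
  set IU := (∫⁻ y in halfBall n (by omega) (3 / 2), ENNReal.ofReal ((max (u y) 0) ^ r)) ^ (1 / r) with hIU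
  set IF := LpqNormHB n (by omega) p q d0 2 (fun y => max (f y) 0) with hIF
  by_cases htop : IU + IF = ∞
  · rw [htop, ENNReal.mul_top (by simpa using (by positivity : 0 < (Cb + 1 / ρ0) * (Cl + 1)))]
    exact le_top
  have hIUt : IU ≠ ∞ := fun h => htop (by rw [h, top_add])
  have hIFt : IF ≠ ∞ := fun h => htop (by rw [h, add_top])
  set U := IU.toReal with hU
  set F := IF.toReal with hF
  have hU0 : 0 ≤ U := ENNReal.toReal_nonneg
  have hF0 : 0 ≤ F := ENNReal.toReal_nonneg
  have hIUe : IU = ENNReal.ofReal U := (ENNReal.ofReal_toReal hIUt).symm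
  have hIFe : IF = ENNReal.ofReal F := (ENNReal.ofReal_toReal hIFt).symm
  have habs : (fun y => ENNReal.ofReal |max (f y) 0|) = fun y => ENNReal.ofReal (max (f y) 0) := by
    ext y; rw [abs_of_nonneg (le_max_right _ _)]
  have hNfp : NN n p (fun y => ENNReal.ofReal (max (f y) 0)) (halfBall n hn' 2) ≤ ENNReal.ofReal F := by
    rw [← hIFe, hIF, LpqNormHB, LpNormE_eq n hp0, habs]
    exact le_self_add
  have hNfq : NN n q (fun y => ENNReal.ofReal (max (f y) 0)) {y ∈ halfBall n hn' 2 | lastC n hn' y < d0}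
      ≤ ENNReal.ofReal F := by
    rw [← hIFe, hIF, LpqNormHB, LpNormE_eq n hq0 _ {y ∈ halfBall n hn' 2 | lastC n hn' y < d0}, habs]
    exact le_add_self
  have hNbq : NN n q (fun y => ENNReal.ofReal (b y)) (halfBall n hn' 2) ≤ ENNReal.ofReal K := by
    refine le_trans ?_ hNb
    rw [LpNormE_eq n hq0]
    unfold NN
    exact ENNReal.rpow_le_rpow (lintegral_mono fun y => ENNReal.rpow_le_rpow
      (ENNReal.ofReal_le_ofReal (le_abs_self (b y))) hq0.le) (by positivity)
  have hQsub : ∀ (c : EuclideanSpace ℝ (Fin n)) (ρ : ℝ), ‖c‖ + ρ < 2 →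
      hQ n hn' c ρ ⊆ halfBall n hn' 2 ∪ flatB n hn' 2 := by
    intro c ρ h y hy
    have h1 : ‖y‖ < 2 := by
      have := norm_add_le (y - c) c
      rw [sub_add_cancel] at this
      linarith [hy.1]
    rcases hy.2.eq_or_lt with h0 | h0
    · exact Or.inr ⟨h1.le, h0.symm⟩
    · exact Or.inl ⟨h1, h0⟩
  have hBsub : ∀ (c : EuclideanSpace ℝ (Fin n)) (ρ : ℝ), ‖c‖ + ρ < 2 →
      hB n hn' c ρ ⊆ halfBall n hn' 2 := by
    intro c ρ h y hy
    have := norm_add_le (y - c) c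
    rw [sub_add_cancel] at this
    exact ⟨by linarith [hy.1], hy.2⟩
  have hfl : ∀ (c : EuclideanSpace ℝ (Fin n)) (ρ : ℝ), ‖c‖ + ρ < 2 →
      ∀ y ∈ hQ n hn' c ρ, lastC n hn' y = 0 → u y ≤ 0 := by
    intro c ρ h y hy h0
    have := norm_add_le (y - c) c
    rw [sub_add_cancel] at this
    exact hflat y ⟨by linarith [hy.1], h0⟩
  have h32 : ‖(0 : EuclideanSpace ℝ (Fin n))‖ + 3 / 2 < 2 := by rw [norm_zero]; norm_num
  have hhalf : hB n hn' 0 (3 / 2) = halfBall n hn' (3 / 2) := by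
    ext y; simp [hB, halfBall]
  have hS0 := hBsub 0 (3 / 2) h32
  have hsup := hlmp b f u (hb.mono hS0) (hf.mono hS0) (fun y hy => hb0 y (hS0 hy))
    (hu.mono (hQsub 0 (3 / 2) h32)) (hu2.mono hS0) (fun y hy => hpde y (hS0 hy)) (hfl 0 (3 / 2) h32)
    F U hF0 hU0 ((NN_mono_set n hp0 _ hS0).trans hNfp) ((NN_mono_set n hq0 _ hS0).trans hNbq)
    (by rw [hhalf, ← hIUe])
  rw [hIUe, hIFe, ← ENNReal.ofReal_add hU0 hF0, ← ENNReal.ofReal_mul (by positivity)]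
  refine ENNReal.ofReal_le_ofReal ?_
  set N := (Cl + 1) * (F + U) with hN
  have hN0 : 0 ≤ N := by positivity
  have hFN : F ≤ N := by
    rw [hN]; nlinarith
  have hsupN : ∀ y ∈ hQ n hn' 0 (5 / 4), u y ≤ N := by
    intro y hy
    have := hsup y hy
    rw [hN]; linarith
  have hxl : 0 < lastC n hn' x := hx.2
  have hgoal : (Cb + 1 / ρ0) * (Cl + 1) * (U + F) = (Cb + 1 / ρ0) * N := by rw [hN]; ring
  rw [hgoal]
  refine ofReal_max_div hxl (by positivity) hN0 ?_
  have hx1 : ‖x‖ < 1 := hx.1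
  have hr0 : 0 < 1 / ρ0 := by positivity
  by_cases hcase : ρ0 ≤ lastC n hn' x
  · have h1 := hsupN x ⟨by rw [sub_zero]; linarith, hxl.le⟩
    have h2 : 1 ≤ (Cb + 1 / ρ0) * lastC n hn' x := by
      have : 1 ≤ 1 / ρ0 * lastC n hn' x := by
        rw [one_div, inv_mul_eq_div, le_div_iff₀ hρ0]; linarith
      nlinarith
    nlinarith
  push Not at hcase
  set t := lastC n hn' x with ht
  set e : EuclideanSpace ℝ (Fin n) := EuclideanSpace.single ⟨n - 1, by omega⟩ t with he
  set c := x - e with hc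
  have hcl : lastC n hn' c = 0 := by
    simp [lastC, hc, he, ht]
  have hxc : ‖x - c‖ = t := by
    have : x - c = e := by rw [hc]; abel
    rw [this, he, EuclideanSpace.norm_single, Real.norm_eq_abs, abs_of_pos hxl]
  have hcx : ‖c‖ ≤ ‖x‖ := by
    rw [EuclideanSpace.norm_eq, EuclideanSpace.norm_eq]
    refine Real.sqrt_le_sqrt (Finset.sum_le_sum fun i _ => ?_)
    have : |c i| ≤ |x i| := by
      by_cases hi : i = ⟨n - 1, by omega⟩
      · have : c i = 0 := by rw [hi]; exact hcl
        rw [this, abs_zero]; exact abs_nonneg _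
      · have : c i = x i := by simp [hc, he, hi]
        rw [this]
    exact pow_le_pow_left₀ (norm_nonneg _) this 2
  have hcρ : ‖c‖ + ρ0 < 2 := by linarith
  have hS1 := hBsub c ρ0 hcρ
  have hS2 : hB n hn' c ρ0 ⊆ {y ∈ halfBall n hn' 2 | lastC n hn' y < d0} := by
    intro y hy
    refine ⟨hS1 hy, ?_⟩
    have h1 := abs_lastC_le n hn' (y - c)
    have h2 : lastC n hn' (y - c) = lastC n hn' y - lastC n hn' c := rfl
    rw [h2, hcl, sub_zero] at h1
    linarith [le_abs_self (lastC n hn' y), hy.1]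
  have hfin := hbdry c hcl b f u (hb.mono hS1) (hf.mono hS1) (fun y hy => hb0 y (hS1 hy))
    (hu.mono (hQsub c ρ0 hcρ)) (hu2.mono hS1) (fun y hy => hpde y (hS1 hy)) (hfl c ρ0 hcρ)
    N hN0 (fun y hy => hsupN y ⟨by
      have := norm_add_le (y - c) c
      rw [sub_add_cancel] at this
      rw [sub_zero]
      linarith [hy.1], hy.2⟩)
    (((NN_mono_set n hq0 _ hS2).trans hNfq).trans (ENNReal.ofReal_le_ofReal hFN))
    ((NN_mono_set n hq0 _ hS1).trans hNbq) x ⟨by rw [hxc]; exact hcase, hxl⟩ hxc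
  have h3 : 0 ≤ 1 / ρ0 * N * t := by positivity
  rw [← ht] at hfin
  linarith
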